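/- arXiv:1407.4680 — 2 statements merged into one kernel-verified Lean document; each statement's English description precedes it below -/
import Mathlib

section
/- For every g ≥ 5, the abelianisation of the group O_{g,g}(ℤ) is isomorphic to (ℤ/2ℤ) × (ℤ/2ℤ). -/
open Matrix

/-- Index type for `2g × 2g` matrices: the first `g` indices correspond to the
basis vectors `e₁, …, e_g` and the last `g` to `f₁, …, f_g`. -/
abbrev HypIdx (g : ℕ) := Fin g ⊕ Fin g

/-- Gram matrix of the orthogonal sum of `g` hyperbolic planes. -/
def Qmat (g : ℕ) : Matrix (HypIdx g) (HypIdx g) ℤ := Matrix.fromBlocks 0 1 1 0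

/-- The standard symplectic form matrix. -/
def Jmat (g : ℕ) : Matrix (HypIdx g) (HypIdx g) ℤ := Matrix.fromBlocks 0 1 (-1) 0

/-- The subgroup of `GL_{2g}(ℤ)` of matrices `A` with `Aᵀ * Q * A = Q`. -/
def formGroup (g : ℕ) (Q : Matrix (HypIdx g) (HypIdx g) ℤ) :
    Subgroup (GL (HypIdx g) ℤ) where
  carrier := {A | A.valᵀ * Q * A.val = Q}
  one_mem' := by simp
  mul_mem' := by
    intro A B hA hB
    have hA' : A.valᵀ * Q * A.val = Q := hA
    have hB' : B.valᵀ * Q * B.val = Q := hB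
    show (A * B).valᵀ * Q * (A * B).val = Q
    rw [Units.val_mul, transpose_mul]
    calc B.valᵀ * A.valᵀ * Q * (A.val * B.val)
        = B.valᵀ * (A.valᵀ * Q * A.val) * B.val := by noncomm_ring
      _ = B.valᵀ * Q * B.val := by rw [hA']
      _ = Q := hB'
  inv_mem' := by
    intro A hA
    have hA' : A.valᵀ * Q * A.val = Q := hA
    show (A⁻¹).valᵀ * Q * (A⁻¹).val = Q
    have h1 : A.val * (A⁻¹).val = 1 := by
      rw [← Units.val_mul, mul_inv_cancel, Units.val_one]
    calc (A⁻¹).valᵀ * Q * (A⁻¹).val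
        = (A⁻¹).valᵀ * (A.valᵀ * Q * A.val) * (A⁻¹).val := by rw [hA']
      _ = (A.val * (A⁻¹).val)ᵀ * Q * (A.val * (A⁻¹).val) := by
          rw [transpose_mul]; noncomm_ring
      _ = Q := by rw [h1]; simp

/-- `O_{g,g}(ℤ)`. -/
def Ogg (g : ℕ) : Subgroup (GL (HypIdx g) ℤ) := formGroup g (Qmat g)

/-- `Sp_{2g}(ℤ)`. -/
def Sp (g : ℕ) : Subgroup (GL (HypIdx g) ℤ) := formGroup g (Jmat g)

/-- The standard quadratic refinement `q(x, y) = Σᵢ xᵢ yᵢ mod 2`. -/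
def qform (g : ℕ) (v : HypIdx g → ℤ) : ZMod 2 :=
  ∑ i : Fin g, ((v (Sum.inl i) * v (Sum.inr i) : ℤ) : ZMod 2)

/-- The subgroup of `GL_{2g}(ℤ)` preserving the quadratic refinement `q`. -/
def qPreserving (g : ℕ) : Subgroup (GL (HypIdx g) ℤ) where
  carrier := {A | ∀ v : HypIdx g → ℤ, qform g (A.val.mulVec v) = qform g v}
  one_mem' := by intro v; simp
  mul_mem' := by
    intro A B hA hB v
    show qform g ((A * B).val.mulVec v) = qform g v
    rw [Units.val_mul, ← Matrix.mulVec_mulVec, hA, hB]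
  inv_mem' := by
    intro A hA v
    have h1 : A.val.mulVec ((A⁻¹).val.mulVec v) = v := by
      rw [Matrix.mulVec_mulVec, ← Units.val_mul, mul_inv_cancel, Units.val_one,
        Matrix.one_mulVec]
    calc qform g ((A⁻¹).val.mulVec v)
        = qform g (A.val.mulVec ((A⁻¹).val.mulVec v)) := (hA _).symm
      _ = qform g v := by rw [h1]

/-- `Sp^q_{2g}(ℤ)`: symplectic matrices preserving the quadratic refinement. -/
def Spq (g : ℕ) : Subgroup (GL (HypIdx g) ℤ) := Sp g ⊓ qPreserving g

open scoped commutatorElement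

namespace OggAux

variable {g : ℕ}

lemma Qmat_apply (i j : HypIdx g) : Qmat g i j = if j = i.swap then 1 else 0 := by
  rcases i with i | i <;> rcases j with j | j <;>
    simp [Qmat, Matrix.one_apply, eq_comm]

lemma Q_sq : Qmat g * Qmat g = 1 := by
  simp [Qmat, Matrix.fromBlocks_multiply]

/-- build an element of the group from a matrix -/
def mk (M : Matrix (HypIdx g) (HypIdx g) ℤ) (h : Mᵀ * Qmat g * M = Qmat g) : Ogg g :=
  have h1 : (Qmat g * Mᵀ * Qmat g) * M = 1 := by
    rw [Matrix.mul_assoc (Qmat g), Matrix.mul_assoc (Qmat g), h, Q_sq]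
  ⟨⟨M, Qmat g * Mᵀ * Qmat g, mul_eq_one_comm.mp h1, h1⟩, h⟩

/-- underlying matrix -/
def mat (A : Ogg g) : Matrix (HypIdx g) (HypIdx g) ℤ := A.1.val

@[simp] lemma mat_mk (M : Matrix (HypIdx g) (HypIdx g) ℤ) (h) : mat (mk M h) = M := rfl
@[simp] lemma mat_mul (A B : Ogg g) : mat (A * B) = mat A * mat B := rfl
@[simp] lemma mat_one : mat (1 : Ogg g) = 1 := rfl
lemma mat_inj {A B : Ogg g} (h : mat A = mat B) : A = B := Subtype.ext (Units.ext h)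
lemma mat_form (A : Ogg g) : (mat A)ᵀ * Qmat g * mat A = Qmat g := A.2

lemma Q_mul_apply (M : Matrix (HypIdx g) (HypIdx g) ℤ) (i j) :
    (Qmat g * M) i j = M i.swap j := by
  simp [Matrix.mul_apply, Qmat_apply]

lemma form_apply (A : Ogg g) (j k : HypIdx g) :
    ∑ i, mat A i j * mat A i.swap k = if k = j.swap then 1 else 0 := by
  rw [← Qmat_apply, ← mat_form A, Matrix.mul_assoc, Matrix.mul_apply]
  simp [Q_mul_apply]

lemma ne_swap (w : HypIdx g) : w ≠ w.swap := by cases w <;> simp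
lemma swap_ne (w : HypIdx g) : w.swap ≠ w := by cases w <;> simp
lemma swap_inj {u w : HypIdx g} : u.swap = w.swap ↔ u = w :=
  ⟨fun h => by simpa using congrArg Sum.swap h, fun h => by rw [h]⟩
lemma swap_eq_iff {u w : HypIdx g} : u.swap = w ↔ u = w.swap :=
  ⟨fun h => by simp [← h], fun h => by simp [h]⟩

lemma Q_mul_single (w u : HypIdx g) (c : ℤ) :
    Qmat g * Matrix.single w u c = Matrix.single w.swap u c := by
  ext i j
  rw [Q_mul_apply, Matrix.single_apply, Matrix.single_apply]
  simp only [swap_eq_iff]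

lemma single_mul_Q (w u : HypIdx g) (c : ℤ) :
    Matrix.single w u c * Qmat g = Matrix.single w u.swap c := by
  have hQ : (Qmat g)ᵀ = Qmat g := by simp [Qmat, Matrix.fromBlocks_transpose]
  have := congrArg Matrix.transpose (Q_mul_single u w c)
  simpa [Matrix.transpose_mul, hQ] using this

lemma single_mul_single' (a b c d : HypIdx g) (x y : ℤ) :
    Matrix.single a b x * Matrix.single c d y =
      if b = c then Matrix.single a d (x * y) else 0 := by
  split_ifs with h
  · subst h; simp
  · simp [h]

def Xmat (u w : HypIdx g) (c : ℤ) : Matrix (HypIdx g) (HypIdx g) ℤ :=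
  1 + Matrix.single w u c - Matrix.single u.swap w.swap c

lemma Xmat_form (u w : HypIdx g) (c : ℤ) (h1 : w ≠ u) (h2 : w ≠ u.swap) :
    (Xmat u w c)ᵀ * Qmat g * Xmat u w c = Qmat g := by
  have h3 : u ≠ w := h1.symm
  simp [Xmat, Matrix.transpose_add, Matrix.transpose_sub, add_mul, mul_add, sub_mul, mul_sub,
    Q_mul_single, single_mul_Q, single_mul_single', swap_inj, ne_swap, swap_ne, h1, h3]

/-- Elementary transformation. -/
def X (u w : HypIdx g) (c : ℤ) (h1 : w ≠ u) (h2 : w ≠ u.swap) : Ogg g :=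
  mk (Xmat u w c) (Xmat_form u w c h1 h2)

lemma X_mul_apply (u w : HypIdx g) (c : ℤ) (h1 : w ≠ u) (h2 : w ≠ u.swap) (A : Ogg g)
    (i j : HypIdx g) :
    mat (X u w c h1 h2 * A) i j = mat A i j + (if i = w then c * mat A u j else 0)
      - (if i = u.swap then c * mat A w.swap j else 0) := by
  simp only [mat_mul, X, mat_mk, Xmat, add_mul, sub_mul, one_mul, Matrix.sub_apply,
    Matrix.add_apply]
  congr 1
  · congr 1
    split_ifs with h
    · subst h; simp
    · simp [h]
  · split_ifs with h
    · subst h; simp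
    · simp [h]

lemma X_comm (u w z : HypIdx g) (c : ℤ) (h1 : w ≠ u) (h2 : w ≠ u.swap)
    (h3 : z ≠ w) (h4 : z ≠ w.swap) (h5 : z ≠ u) (h6 : z ≠ u.swap) :
    X w z 1 h3 h4 * X u w c h1 h2 = X u z c h5 h6 * (X u w c h1 h2 * X w z 1 h3 h4) := by
  have h1' := h1.symm
  have h3' := h3.symm
  have h5' := h5.symm
  have h2' : ¬ u.swap = w := h2.symm
  have h4' : ¬ w.swap = z := h4.symm
  have h6' : ¬ u.swap = z := h6.symm
  have h2'' : ¬ u = w.swap := fun h => h2 (by simp [h])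
  have h4'' : ¬ w = z.swap := fun h => h4 (by simp [h])
  have h6'' : ¬ u = z.swap := fun h => h6 (by simp [h])
  apply mat_inj
  simp [X, Xmat, add_mul, mul_add, sub_mul, mul_sub, 
    single_mul_single', swap_inj, ne_swap, swap_ne, swap_eq_iff, *]
  abel

lemma X_mem_comm (hg : 3 ≤ g) (u z : HypIdx g) (c : ℤ) (h5 : z ≠ u) (h6 : z ≠ u.swap) :
    X u z c h5 h6 ∈ commutator (Ogg g) := by
  obtain ⟨w, h1, h2, h3, h4⟩ : ∃ w : HypIdx g, w ≠ u ∧ w ≠ u.swap ∧ z ≠ w ∧ z ≠ w.swap := by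
    let f : HypIdx g → Fin g := Sum.elim id id
    have : ∃ k : Fin g, k ≠ f u ∧ k ≠ f z := by
      have hc : ({f u, f z} : Finset (Fin g)).card < (Finset.univ : Finset (Fin g)).card := by
        have := Finset.card_le_two (a := f u) (b := f z)
        simp; omega
      obtain ⟨k, -, hk⟩ := Finset.exists_mem_notMem_of_card_lt_card hc
      exact ⟨k, by simpa using hk⟩
    obtain ⟨k, hk1, hk2⟩ := this
    refine ⟨Sum.inl k, ?_, ?_, ?_, ?_⟩ <;>
    rcases u with u | u <;> rcases z with z | z <;> simp_all [f, eq_comm]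
  have := X_comm u w z c h1 h2 h3 h4 h5 h6
  have e : X u z c h5 h6 = ⁅X w z 1 h3 h4, X u w c h1 h2⁆ := by
    rw [commutatorElement_def, this]; group
  rw [e]
  exact Subgroup.commutator_mem_commutator (Subgroup.mem_top _) (Subgroup.mem_top _)

def idx (i : HypIdx g) : ℕ := Sum.elim (fun a => a.val) (fun a => a.val) i

lemma idx_swap (i : HypIdx g) : idx i.swap = idx i := by cases i <;> rfl

lemma idx_eq {i j : HypIdx g} (h : idx i = idx j) : i = j ∨ i = j.swap := by
  rcases i with i | i <;> rcases j with j | j <;> simpa [idx, Fin.ext_iff] using h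

lemma idx_lt (i : HypIdx g) : idx i < g := by cases i <;> simp [idx]

def Fix (k : ℕ) (A : Ogg g) : Prop :=
  ∀ j, idx j < k → ∀ i, mat A i j = if i = j then 1 else 0

lemma fix_X {k : ℕ} {A : Ogg g} (hA : Fix k A) (u w : HypIdx g) (c : ℤ) (h1 : w ≠ u)
    (h2 : w ≠ u.swap) (hu : k ≤ idx u) (hw : k ≤ idx w) : Fix k (X u w c h1 h2 * A) := by
  intro j hj i
  have e1 : u ≠ j := by rintro rfl; omega
  have e2 : w.swap ≠ j := by rintro rfl; rw [idx_swap] at hj; omega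
  rw [X_mul_apply, hA j hj, hA j hj, hA j hj, if_neg e1, if_neg e2]
  simp

lemma fix_zero {k : ℕ} {A : Ogg g} (hA : Fix k A) {i j : HypIdx g} (hi : idx i < k)
    (hj : k ≤ idx j) : mat A i j = 0 := by
  have h := form_apply A j i.swap
  have e : i ≠ j := by rintro rfl; omega
  rw [if_neg (by rw [swap_inj]; exact e)] at h
  have h2 : ∀ i', mat A i'.swap i.swap = if i' = i then 1 else 0 := by
    intro i'
    rw [hA i.swap (by rw [idx_swap]; exact hi)]
    simp [swap_inj]
  simpa [h2] using h

lemma clear (hg : 3 ≤ g) {k : ℕ} (u j : HypIdx g) (hu : k ≤ idx u) (T : Finset (HypIdx g))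
    (A : Ogg g) (hA : Fix k A)
    (hT : ∀ w ∈ T, w ≠ u ∧ w ≠ u.swap ∧ k ≤ idx w ∧ mat A u j ∣ mat A w j) :
    ∃ h ∈ commutator (Ogg g), Fix k (h * A) ∧ mat (h * A) u j = mat A u j ∧
      (∀ w ∈ T, mat (h * A) w j = 0) ∧ (∀ w ∉ T, w ≠ u.swap → mat (h * A) w j = mat A w j) ∧
      (∀ j', (∀ i, i ≠ u.swap → mat A i j' = 0) → ∀ i, mat (h * A) i j' = mat A i j') := by
  induction T using Finset.induction_on with
  | empty => exact ⟨1, one_mem _, by simpa using hA, by simp, by simp, by simp, by simp⟩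
  | insert w T hw ih =>
    obtain ⟨h, hS, hF, hu1, hz, hs, hc⟩ := ih (fun w hw => hT w (Finset.mem_insert_of_mem hw))
    obtain ⟨h1, h2, hk, c, hd⟩ := hT w (Finset.mem_insert_self _ _)
    refine ⟨X u w (-c) h1 h2 * h, mul_mem (X_mem_comm hg _ _ _ _ _) hS, ?_, ?_, ?_, ?_, ?_⟩
    · rw [mul_assoc]; exact fix_X hF _ _ _ _ _ hu hk
    · rw [mul_assoc, X_mul_apply, if_neg h1.symm, if_neg (ne_swap u), hu1]; simp
    · intro v hv
      rw [mul_assoc, X_mul_apply, if_neg (hT v hv).2.1]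
      rcases Finset.mem_insert.mp hv with rfl | hv'
      · rw [if_pos rfl, hs _ hw h2, hu1, hd]; ring
      · rw [if_neg (by rintro rfl; exact hw hv'), hz v hv']; simp
    · intro v hv hvu
      rw [Finset.mem_insert, not_or] at hv
      rw [mul_assoc, X_mul_apply, if_neg hv.1, if_neg hvu, hs v hv.2 hvu]; simp
    · intro j' hj' i
      have e := hc j' hj'
      rw [mul_assoc, X_mul_apply, e, e, e, hj' u (ne_swap u),
        hj' w.swap (by rw [Ne, swap_inj]; exact h1)]
      simp

lemma exists_ne (A : Ogg g) (j : HypIdx g) : ∃ u, mat A u j ≠ 0 := by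
  by_contra! h
  have := form_apply A j j.swap
  simp [h] at this

lemma reach1 (hg : 3 ≤ g) {k : ℕ} (e : HypIdx g) (he : k ≤ idx e) (n : ℕ) :
    ∀ (A : Ogg g) (u : HypIdx g), Fix k A → mat A u e ≠ 0 → (mat A u e).natAbs = n →
    ∃ h ∈ commutator (Ogg g), Fix k (h * A) ∧ ∃ u, k ≤ idx u ∧ ∃ d : ℤ, d * d = 1 ∧
      ∀ i, mat (h * A) i e = if i = u then d else 0 := by
  induction n using Nat.strong_induction_on with
  | _ n ih =>
  intro A u hA hne hn
  have hu : k ≤ idx u := by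
    by_contra! hlt
    exact hne (fix_zero hA hlt he)
  by_cases hdiv : ∀ w, w ≠ u → w ≠ u.swap → mat A u e ∣ mat A w e
  · obtain ⟨h, hS, hF, h1, h2, -, -⟩ := clear hg u e hu
      (Finset.univ.filter (fun w => w ≠ u ∧ w ≠ u.swap ∧ k ≤ idx w)) A hA (by
        intro w hw
        simp only [Finset.mem_filter, Finset.mem_univ, true_and] at hw
        exact ⟨hw.1, hw.2.1, hw.2.2, hdiv w hw.1 hw.2.1⟩)
    have h3 : ∀ w, w ≠ u → w ≠ u.swap → mat (h * A) w e = 0 := by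
      intro w hw1 hw2
      by_cases hk : k ≤ idx w
      · exact h2 w (by simp [hw1, hw2, hk])
      · exact fix_zero hF (by omega) he
    have h4 : mat (h * A) u.swap e = 0 := by
      have q := form_apply (h * A) e e
      rw [if_neg (ne_swap e), Finset.sum_eq_add u u.swap (ne_swap u)] at q
      · rw [Sum.swap_swap, h1] at q
        have : mat A u e * mat (h * A) u.swap e = 0 := by linarith [mul_comm (mat A u e) (mat (h * A) u.swap e)]
        exact (mul_eq_zero.mp this).resolve_left hne
      · intro c _ hc
        rw [h3 c hc.1 hc.2, zero_mul]
      · simp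
      · simp
    have h5 : ∀ i, mat (h * A) i e = if i = u then mat A u e else 0 := by
      intro i
      split_ifs with hi
      · rw [hi, h1]
      · by_cases hi2 : i = u.swap
        · rw [hi2, h4]
        · exact h3 i hi hi2
    refine ⟨h, hS, hF, u, hu, mat A u e, ?_, h5⟩
    have q := form_apply (h * A) e e.swap
    simp only [h5, ite_mul, zero_mul, Finset.sum_ite_eq', Finset.mem_univ, if_true] at q
    have hun : IsUnit (mat A u e) := IsUnit.of_mul_eq_one _ q
    rcases Int.isUnit_iff.mp hun with h | h <;> rw [h] <;> norm_num
  · push Not at hdiv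
    obtain ⟨w, h1, h2, h3⟩ := hdiv
    have hw : k ≤ idx w := by
      by_contra! hlt
      exact h3 (by rw [fix_zero hA hlt he]; exact dvd_zero _)
    have hX : mat (X u w (-(mat A w e / mat A u e)) h1 h2 * A) w e = mat A w e % mat A u e := by
      rw [X_mul_apply, if_pos rfl, if_neg h2, Int.emod_def]; ring
    obtain ⟨h, hS, hF, hr⟩ := ih _ (by
        rw [← hn]
        have a1 := Int.emod_nonneg (mat A w e) hne
        have a2 := Int.emod_lt_abs (mat A w e) hne
        rw [Int.abs_eq_natAbs] at a2
        show (mat A w e % mat A u e).natAbs < _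
        omega) (X u w (-(mat A w e / mat A u e)) h1 h2 * A) w
      (fix_X hA _ _ _ _ _ hu hw) (by rw [hX]; exact fun h => h3 (Int.dvd_of_emod_eq_zero h))
      (by rw [hX])
    rw [← mul_assoc] at hF hr
    exact ⟨_, mul_mem hS (X_mem_comm hg _ _ _ _ _), hF, hr⟩

lemma move (hg : 3 ≤ g) {k : ℕ} (e u w : HypIdx g) (hu : k ≤ idx u) (hw : k ≤ idx w)
    (h1 : w ≠ u) (h2 : w ≠ u.swap) (A : Ogg g) (hA : Fix k A) (d : ℤ) (hd : d * d = 1)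
    (h : ∀ i, mat A i e = if i = u then d else 0) :
    ∃ h ∈ commutator (Ogg g), Fix k (h * A) ∧ ∀ i, mat (h * A) i e = if i = w then 1 else 0 := by
  have h3 : u ≠ w.swap := fun h => h2 (by simp [h])
  refine ⟨X w u (-d) h1.symm h3 * X u w d h1 h2,
    mul_mem (X_mem_comm hg _ _ _ _ _) (X_mem_comm hg _ _ _ _ _), ?_, ?_⟩
  · rw [mul_assoc]
    exact fix_X (fix_X hA _ _ _ _ _ hu hw) _ _ _ _ _ hw hu
  · intro i
    have h4 : ∀ i, mat (X u w d h1 h2 * A) i e = if i = w then 1 else if i = u then d else 0 := by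
      intro i
      rw [X_mul_apply, h, h, h, if_pos rfl, if_neg h3.symm, hd]
      by_cases hi : i = w
      · subst hi; simp [h1]
      · simp [hi]
    rw [mul_assoc, X_mul_apply, h4, h4, h4, if_pos rfl, if_neg h2.symm, if_neg (swap_ne u)]
    by_cases hi : i = w
    · subst hi; simp [h1]
    · by_cases hi2 : i = u
      · subst hi2; simp [hi]
      · simp [hi, hi2]

lemma reach (hg : 3 ≤ g) {k : ℕ} (hk : k + 1 < g) (A : Ogg g) (hA : Fix k A) (e : HypIdx g)
    (he : idx e = k) :
    ∃ h ∈ commutator (Ogg g), Fix k (h * A) ∧ ∀ i, mat (h * A) i e = if i = e then 1 else 0 := by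
  obtain ⟨u, hu⟩ := exists_ne A e
  obtain ⟨h, hS, hF, v, hv, d, hd, hc⟩ := reach1 hg e he.ge _ A u hA hu rfl
  by_cases hve : idx v = k
  · let w : HypIdx g := Sum.inl ⟨k + 1, hk⟩
    have hw : idx w = k + 1 := rfl
    obtain ⟨h', hS', hF', hc'⟩ := move hg e v w hv (by omega) (by rintro rfl; omega)
      (by intro h; rw [h, idx_swap] at hw; omega) (h * A) hF d hd hc
    obtain ⟨h'', hS'', hF'', hc''⟩ := move hg e w e (by omega) he.ge (by rintro h; rw [h] at he; omega)
      (by intro h; rw [h, idx_swap] at he; omega) _ hF' 1 (by norm_num) hc'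
    refine ⟨h'' * (h' * h), mul_mem hS'' (mul_mem hS' hS), ?_, ?_⟩
    · simpa only [mul_assoc] using hF''
    · simpa only [mul_assoc] using hc''
  · obtain ⟨h'', hS'', hF'', hc''⟩ := move hg e v e hv he.ge (by rintro rfl; omega)
      (by intro h; rw [h, idx_swap] at he; omega) _ hF d hd hc
    refine ⟨h'' * h, mul_mem hS'' hS, ?_, ?_⟩
    · simpa only [mul_assoc] using hF''
    · simpa only [mul_assoc] using hc''

lemma fix_succ {k : ℕ} {A : Ogg g} (hA : Fix k A) (e : HypIdx g) (he : idx e = k)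
    (h1 : ∀ i, mat A i e = if i = e then 1 else 0)
    (h2 : ∀ i, i ≠ e → i ≠ e.swap → mat A i e.swap = 0) : Fix (k + 1) A := by
  have h3 : mat A e.swap e.swap = 1 := by
    have q := form_apply A e e.swap
    simpa [h1] using q
  have h4 : mat A e e.swap = 0 := by
    have q := form_apply A e.swap e.swap
    rw [Sum.swap_swap, if_neg (swap_ne e), Finset.sum_eq_add e e.swap (ne_swap e)] at q
    · rw [Sum.swap_swap, h3] at q
      linarith
    · intro c _ hc
      rw [h2 c hc.1 hc.2, zero_mul]
    · simp
    · simp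
  intro j hj i
  by_cases hjk : idx j < k
  · exact hA j hjk i
  · rcases idx_eq (show idx j = idx e by omega) with rfl | rfl
    · exact h1 i
    · by_cases hi : i = e
      · rw [hi, h4, if_neg (ne_swap e)]
      · by_cases hi2 : i = e.swap
        · rw [hi2, h3, if_pos rfl]
        · rw [h2 i hi hi2, if_neg hi2]

lemma step (hg : 3 ≤ g) {k : ℕ} (hk : k + 1 < g) (A : Ogg g) (hA : Fix k A) :
    ∃ h ∈ commutator (Ogg g), Fix (k + 1) (h * A) := by
  let e : HypIdx g := Sum.inl ⟨k, by omega⟩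
  have he : idx e = k := rfl
  obtain ⟨h, hS, hF, h1⟩ := reach hg hk A hA e he
  have h3 : mat (h * A) e.swap e.swap = 1 := by
    have q := form_apply (h * A) e e.swap
    simpa [h1] using q
  obtain ⟨h', hS', hF', -, h2', -, h5'⟩ := clear hg e.swap e.swap (by rw [idx_swap, he])
      (Finset.univ.filter (fun w => w ≠ e.swap ∧ w ≠ e.swap.swap ∧ k ≤ idx w)) (h * A) hF (by
        intro w hw
        simp only [Finset.mem_filter, Finset.mem_univ, true_and] at hw
        exact ⟨hw.1, hw.2.1, hw.2.2, by rw [h3]; exact one_dvd _⟩)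
  refine ⟨h' * h, mul_mem hS' hS, ?_⟩
  rw [mul_assoc]
  refine fix_succ hF' e he ?_ ?_
  · intro i
    rw [h5' e, h1]
    intro i hi
    rw [Sum.swap_swap] at hi
    rw [h1, if_neg hi]
  · intro i hi1 hi2
    by_cases hk : k ≤ idx i
    · exact h2' i (by simp [hi1, hi2, hk])
    · exact fix_zero hF' (by omega) (by rw [idx_swap, he])

def lst (hg : 3 ≤ g) : HypIdx g := Sum.inl ⟨g - 1, by omega⟩

lemma lst_idx (hg : 3 ≤ g) : idx (lst hg) = g - 1 := rfl

lemma toLast (hg : 3 ≤ g) (A : Ogg g) (k : ℕ) (hk : k + 1 ≤ g) :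
    ∃ h ∈ commutator (Ogg g), Fix k (h * A) := by
  induction k with
  | zero => exact ⟨1, one_mem _, fun j hj => by omega⟩
  | succ k ih =>
    obtain ⟨h, hS, hF⟩ := ih (by omega)
    obtain ⟨h', hS', hF'⟩ := step hg (by omega) _ hF
    exact ⟨h' * h, mul_mem hS' hS, by rw [mul_assoc]; exact hF'⟩

/-- permutation swapping the last plane -/
def sperm (hg : 3 ≤ g) : Equiv.Perm (HypIdx g) := Equiv.swap (lst hg) (lst hg).swap

lemma sperm_swap (hg : 3 ≤ g) (i : HypIdx g) : sperm hg i.swap = (sperm hg i).swap := by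
  unfold sperm
  by_cases h1 : i = lst hg
  · subst h1; simp
  · by_cases h2 : i = (lst hg).swap
    · subst h2; simp
    · rw [Equiv.swap_apply_of_ne_of_ne h1 h2, Equiv.swap_apply_of_ne_of_ne]
      · rwa [Ne, swap_eq_iff]
      · rwa [Ne, swap_inj]

def smat (hg : 3 ≤ g) : Matrix (HypIdx g) (HypIdx g) ℤ := (sperm hg).toPEquiv.toMatrix

lemma smat_mul (hg : 3 ≤ g) (M : Matrix (HypIdx g) (HypIdx g) ℤ) (i j) :
    (smat hg * M) i j = M (sperm hg i) j := by
  simp [smat, PEquiv.toMatrix_toPEquiv_mul]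

lemma smat_form (hg : 3 ≤ g) : (smat hg)ᵀ * Qmat g * smat hg = Qmat g := by
  have h1 : smat hg * smat hg = 1 := by
    ext i j
    rw [smat_mul]
    simp [smat, PEquiv.toMatrix_apply, sperm, Matrix.one_apply, eq_comm]
  have h2 : (smat hg)ᵀ = smat hg := by
    ext i j
    simp only [smat, Matrix.transpose_apply, PEquiv.toMatrix_apply, Equiv.toPEquiv_apply,
      Option.mem_some_iff, sperm]
    congr 1
    rw [eq_iff_iff, Equiv.swap_apply_eq_iff, eq_comm]
  have h3 : Qmat g * smat hg = smat hg * Qmat g := by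
    ext i j
    rw [Q_mul_apply, smat_mul, Qmat_apply]
    simp only [smat, PEquiv.toMatrix_apply, Equiv.toPEquiv_apply,
      Option.mem_some_iff, sperm_swap]
    simp [eq_comm]
  rw [h2, Matrix.mul_assoc, h3, ← Matrix.mul_assoc, h1, Matrix.one_mul]

def s (hg : 3 ≤ g) : Ogg g := mk (smat hg) (smat_form hg)

def eps (hg : 3 ≤ g) (i : HypIdx g) : ℤ := if idx i = g - 1 then -1 else 1

lemma eps_sq (hg : 3 ≤ g) (i : HypIdx g) : eps hg i * eps hg i = 1 := by
  unfold eps; split_ifs <;> norm_num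

def t (hg : 3 ≤ g) : Ogg g := mk (Matrix.diagonal (eps hg)) (by
  ext i j
  rw [Matrix.diagonal_transpose, Matrix.mul_diagonal, Matrix.diagonal_mul, Qmat_apply]
  split_ifs with h
  · rw [h, mul_one]
    have : eps hg i.swap = eps hg i := by simp [eps, idx_swap]
    rw [this, eps_sq]
  · simp)

lemma s_mul_apply (hg : 3 ≤ g) (A : Ogg g) (i j) : mat (s hg * A) i j = mat A (sperm hg i) j := by
  rw [mat_mul, s, mat_mk, smat_mul]

lemma t_mul_apply (hg : 3 ≤ g) (A : Ogg g) (i j) : mat (t hg * A) i j = eps hg i * mat A i j := by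
  rw [mat_mul, t, mat_mk, Matrix.diagonal_mul]

lemma s_sq (hg : 3 ≤ g) : s hg * s hg = 1 := by
  have : s hg * (s hg * 1) = 1 := by
    apply mat_inj; ext i j
    rw [s_mul_apply, s_mul_apply]; simp [sperm]
  simpa using this

lemma t_sq (hg : 3 ≤ g) : t hg * t hg = 1 := by
  have : t hg * (t hg * 1) = 1 := by
    apply mat_inj; ext i j
    rw [t_mul_apply, t_mul_apply, ← mul_assoc, eps_sq]; simp
  simpa using this

lemma eq_one_of_fix {A : Ogg g} (h : Fix g A) : A = 1 := by
  apply mat_inj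
  ext i j
  rw [h j (idx_lt j), mat_one, Matrix.one_apply]

lemma base (hg : 3 ≤ g) (A : Ogg g) (hA : Fix (g - 1) A) :
    A = 1 ∨ A = s hg ∨ A = t hg ∨ A = s hg * t hg := by
  -- reduce to entry `1`
  have key1 : ∀ B : Ogg g, Fix (g - 1) B → mat B (lst hg) (lst hg) = 1 →
      mat B (lst hg).swap (lst hg) = 0 → B = 1 := by
    intro B hB h1 h2
    apply eq_one_of_fix
    have hz : ∀ i, i ≠ lst hg → i ≠ (lst hg).swap → idx i < g - 1 := by
      intro i hi1 hi2
      have := idx_lt i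
      by_contra hlt
      rcases idx_eq (show idx i = idx (lst hg) by rw [lst_idx]; omega) with h | h
      · exact hi1 h
      · exact hi2 h
    have := fix_succ hB (lst hg) rfl (by
      intro i
      split_ifs with hi
      · rw [hi, h1]
      · by_cases hi2 : i = (lst hg).swap
        · rw [hi2, h2]
        · exact fix_zero hB (hz i hi hi2) (lst_idx hg).ge) (by
      intro i hi hi2
      exact fix_zero hB (hz i hi hi2) (by rw [idx_swap]; exact (lst_idx hg).ge))
    rwa [show g - 1 + 1 = g by omega] at this
  have fs : ∀ B : Ogg g, Fix (g - 1) B → Fix (g - 1) (s hg * B) := by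
    intro B hB j hj i
    have e1 : j ≠ lst hg := by rintro rfl; rw [lst_idx] at hj; omega
    have e2 : j ≠ (lst hg).swap := by rintro rfl; rw [idx_swap, lst_idx] at hj; omega
    rw [s_mul_apply, hB j hj]
    have : sperm hg i = j ↔ i = j := by
      rw [sperm, Equiv.swap_apply_eq_iff, Equiv.swap_apply_of_ne_of_ne e1 e2]
    simp [this]
  have ft : ∀ B : Ogg g, Fix (g - 1) B → Fix (g - 1) (t hg * B) := by
    intro B hB j hj i
    rw [t_mul_apply, hB j hj]
    by_cases h : i = j
    · subst h
      simp [eps, hj.ne]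
    · simp [h]
  have key2 : ∀ B : Ogg g, Fix (g - 1) B → mat B (lst hg).swap (lst hg) = 0 →
      B = 1 ∨ B = t hg := by
    intro B hB h0
    have hz : ∀ i, i ≠ lst hg → mat B i (lst hg) = 0 := by
      intro i hi1
      by_cases hi2 : i = (lst hg).swap
      · rw [hi2, h0]
      have := idx_lt i
      by_cases hlt : idx i < g - 1
      · exact fix_zero hB hlt (lst_idx hg).ge
      rcases idx_eq (show idx i = idx (lst hg) by rw [lst_idx]; omega) with h | h
      · exact (hi1 h).elim
      · exact (hi2 h).elim
    have q := form_apply B (lst hg) (lst hg).swap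
    rw [if_pos rfl, Finset.sum_eq_single (lst hg) (by
      intro i _ hi; rw [hz i hi, zero_mul]) (by simp)] at q
    have hun : IsUnit (mat B (lst hg) (lst hg)) := IsUnit.of_mul_eq_one _ q
    rcases Int.isUnit_iff.mp hun with h | h
    · exact Or.inl (key1 B hB h h0)
    · right
      have := key1 (t hg * B) (ft B hB) (by rw [t_mul_apply, h]; simp [eps, lst_idx])
        (by rw [t_mul_apply, h0, mul_zero])
      calc B = t hg * (t hg * B) := by rw [← mul_assoc, t_sq, one_mul]
        _ = t hg := by rw [this, mul_one]
  have q := form_apply A (lst hg) (lst hg)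
  rw [if_neg (ne_swap _), Finset.sum_eq_add (lst hg) (lst hg).swap (ne_swap _)] at q
  · rw [Sum.swap_swap] at q
    have : mat A (lst hg) (lst hg) * mat A (lst hg).swap (lst hg) = 0 := by
      linarith [mul_comm (mat A (lst hg) (lst hg)) (mat A (lst hg).swap (lst hg))]
    rcases mul_eq_zero.mp this with h | h
    · have := key2 (s hg * A) (fs A hA) (by rw [s_mul_apply]; simpa [sperm] using h)
      have e : A = s hg * (s hg * A) := by rw [← mul_assoc, s_sq, one_mul]
      rcases this with h | h
      · rw [h, mul_one] at e; tauto
      · rw [h] at e; tauto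
    · have := key2 A hA h
      tauto
  · intro i _ hi
    have := idx_lt i
    by_cases hlt : idx i < g - 1
    · rw [fix_zero hA hlt (lst_idx hg).ge, zero_mul]
    rcases idx_eq (show idx i = idx (lst hg) by rw [lst_idx]; omega) with h | h
    · exact (hi.1 h).elim
    · exact (hi.2 h).elim
  · simp
  · simp

lemma ab_cases (hg : 3 ≤ g) (x : Abelianization (Ogg g)) :
    x = 1 ∨ x = Abelianization.of (s hg) ∨ x = Abelianization.of (t hg) ∨
      x = Abelianization.of (s hg) * Abelianization.of (t hg) := by
  obtain ⟨A, rfl⟩ : ∃ A, Abelianization.of A = x := QuotientGroup.mk_surjective x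
  obtain ⟨h, hS, hF⟩ := toLast hg A (g - 1) (by omega)
  have e : Abelianization.of h = 1 := by
    rwa [← MonoidHom.mem_ker, Abelianization.ker_of]
  have e2 : Abelianization.of A = Abelianization.of (h * A) := by rw [map_mul, e, one_mul]
  rw [e2]
  rcases base hg _ hF with h | h | h | h <;> rw [h] <;> simp

/-- diagonal signature form -/
def Dm (g : ℕ) : Matrix (HypIdx g) (HypIdx g) ℝ := Matrix.fromBlocks 1 0 0 (-1)

def Bf (x : HypIdx g → ℝ) : ℝ := ∑ i, x (Sum.inl i) ^ 2 - ∑ i, x (Sum.inr i) ^ 2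

lemma Bf_eq (x : HypIdx g → ℝ) : Bf x = x ⬝ᵥ (Dm g *ᵥ x) := by
  have : Dm g *ᵥ x = Sum.elim (x ∘ Sum.inl) (- (x ∘ Sum.inr)) := by
    conv_lhs => rw [← Sum.elim_comp_inl_inr x, Dm, Matrix.fromBlocks_mulVec]
    simp [Matrix.neg_mulVec]
  rw [this]
  simp [Bf, dotProduct, Fintype.sum_sum_type, pow_two, sub_eq_add_neg]

lemma Bf_mul {M : Matrix (HypIdx g) (HypIdx g) ℝ} (h : Mᵀ * Dm g * M = Dm g)
    (x : HypIdx g → ℝ) : Bf (M *ᵥ x) = Bf x := by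
  have e : Dm g *ᵥ x = Mᵀ *ᵥ (Dm g *ᵥ (M *ᵥ x)) := by
    rw [Matrix.mulVec_mulVec, Matrix.mulVec_mulVec, h]
  rw [Bf_eq, Bf_eq, e, Matrix.dotProduct_mulVec x, Matrix.vecMul_transpose]

lemma det_ne {M N : Matrix (HypIdx g) (HypIdx g) ℝ} (hM : Mᵀ * Dm g * M = Dm g)
    (hN : Nᵀ * Dm g * N = Dm g) (t : ℝ) (h0 : 0 ≤ t) (h1 : t ≤ 1) :
    (M.toBlocks₁₁ * N.toBlocks₁₁ + t • (M.toBlocks₁₂ * N.toBlocks₂₁)).det ≠ 0 := by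
  intro hdet
  obtain ⟨v, hv, hK⟩ := Matrix.exists_mulVec_eq_zero_iff.mpr hdet
  have a1 := Bf_mul hN (Sum.elim v 0)
  have a2 := Bf_mul hM (Sum.elim (N.toBlocks₁₁ *ᵥ v) (t • (N.toBlocks₂₁ *ᵥ v)))
  have e1 : N *ᵥ (Sum.elim v 0) = Sum.elim (N.toBlocks₁₁ *ᵥ v) (N.toBlocks₂₁ *ᵥ v) := by
    conv_lhs => rw [← Matrix.fromBlocks_toBlocks N, Matrix.fromBlocks_mulVec]
    simp
  have e2 : ∀ i, (M *ᵥ (Sum.elim (N.toBlocks₁₁ *ᵥ v) (t • (N.toBlocks₂₁ *ᵥ v)))) (Sum.inl i) = 0 := by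
    intro i
    have := congrFun hK i
    conv_lhs => rw [← Matrix.fromBlocks_toBlocks M, Matrix.fromBlocks_mulVec]
    simpa [Matrix.add_mulVec, Matrix.smul_mulVec, Matrix.mulVec_smul, Matrix.mulVec_mulVec]
      using this
  rw [e1] at a1
  have hpos : 0 < ∑ i, v i ^ 2 := by
    obtain ⟨i, hi⟩ := Function.ne_iff.mp hv
    exact Finset.sum_pos' (fun i _ => sq_nonneg _) ⟨i, Finset.mem_univ _, by
      have : v i ≠ 0 := hi
      positivity⟩
  simp only [Bf, e2, Sum.elim_inl, Sum.elim_inr, Pi.zero_apply, Pi.smul_apply, smul_eq_mul,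
    mul_pow, ← Finset.mul_sum] at a1 a2
  have b1 : 0 ≤ ∑ i, (N.toBlocks₂₁ *ᵥ v) i ^ 2 := Finset.sum_nonneg fun i _ => sq_nonneg _
  have b2 : 0 ≤ ∑ i, (M *ᵥ (Sum.elim (N.toBlocks₁₁ *ᵥ v) (t • (N.toBlocks₂₁ *ᵥ v))))
    (Sum.inr i) ^ 2 := Finset.sum_nonneg fun i _ => sq_nonneg _
  have b3 : t ^ 2 ≤ 1 := by nlinarith
  have b4 := mul_le_mul_of_nonneg_right b3 b1
  simp at a1 a2
  linarith

lemma sign_mul_blocks {M N : Matrix (HypIdx g) (HypIdx g) ℝ} (hM : Mᵀ * Dm g * M = Dm g)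
    (hN : Nᵀ * Dm g * N = Dm g) :
    SignType.sign (M * N).toBlocks₁₁.det =
      SignType.sign M.toBlocks₁₁.det * SignType.sign N.toBlocks₁₁.det := by
  let F : ℝ → ℝ := fun t =>
    (M.toBlocks₁₁ * N.toBlocks₁₁ + t • (M.toBlocks₁₂ * N.toBlocks₂₁)).det
  have hF : Continuous F := by
    apply Continuous.matrix_det
    fun_prop
  have f0 : F 0 = M.toBlocks₁₁.det * N.toBlocks₁₁.det := by simp [F]
  have f1 : F 1 = (M * N).toBlocks₁₁.det := by
    simp only [F, one_smul]
    conv_rhs => rw [← Matrix.fromBlocks_toBlocks M, ← Matrix.fromBlocks_toBlocks N,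
      Matrix.fromBlocks_multiply, Matrix.toBlocks_fromBlocks₁₁]
  have hne : ∀ t ∈ Set.Icc (0 : ℝ) 1, F t ≠ 0 := fun t ht => det_ne hM hN t ht.1 ht.2
  rw [← sign_mul, ← f0, ← f1]
  have n0 := hne 0 (by simp)
  have n1 := hne 1 (by simp)
  rcases lt_or_gt_of_ne n0 with h0 | h0 <;> rcases lt_or_gt_of_ne n1 with h1 | h1
  · rw [sign_neg h0, sign_neg h1]
  · obtain ⟨t, ht, h⟩ := intermediate_value_Icc zero_le_one hF.continuousOn ⟨h0.le, h1.le⟩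
    exact (hne t ht h).elim
  · obtain ⟨t, ht, h⟩ := intermediate_value_Icc' zero_le_one hF.continuousOn ⟨h1.le, h0.le⟩
    exact (hne t ht h).elim
  · rw [sign_pos h0, sign_pos h1]

def Tm (g : ℕ) : Matrix (HypIdx g) (HypIdx g) ℝ := Matrix.fromBlocks 1 1 1 (-1)

def rm (A : Ogg g) : Matrix (HypIdx g) (HypIdx g) ℝ := (mat A).map (Int.castRingHom ℝ)

noncomputable def tl (A : Ogg g) : Matrix (HypIdx g) (HypIdx g) ℝ := (1 / 2 : ℝ) • (Tm g * rm A * Tm g)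

lemma two_half : (1 / 2 : ℝ) • (Tm g * Tm g) = 1 := by
  rw [Tm, Matrix.fromBlocks_multiply, Matrix.fromBlocks_smul, ← Matrix.fromBlocks_one]
  congr 1
  · ext i j; simp only [Matrix.one_mul, Matrix.smul_apply, Matrix.add_apply, smul_eq_mul]; ring
  · simp
  · simp
  · ext i j; simp only [Matrix.one_mul, neg_mul, mul_neg, neg_neg, Matrix.smul_apply, Matrix.add_apply, smul_eq_mul]; ring

lemma Tm_sq : Tm g * Tm g = (2 : ℝ) • 1 := by
  rw [← two_half, smul_smul]; norm_num

def Qr (g : ℕ) : Matrix (HypIdx g) (HypIdx g) ℝ := Matrix.fromBlocks 0 1 1 0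

lemma rm_form (A : Ogg g) : (rm A)ᵀ * Qr g * rm A = Qr g := by
  have h := congrArg (fun M => M.map (Int.castRingHom ℝ)) (mat_form A)
  have hQ : (Qmat g).map (Int.castRingHom ℝ) = Qr g := by
    simp [Qmat, Qr, Matrix.fromBlocks_map]
  simp only [Matrix.map_mul, hQ] at h
  exact h

lemma TDT : Tm g * Dm g * Tm g = (2 : ℝ) • Qr g := by
  rw [Tm, Dm, Qr, Matrix.fromBlocks_multiply, Matrix.fromBlocks_multiply, Matrix.fromBlocks_smul]
  congr 1 <;> simp [two_smul]

lemma TQT : Tm g * Qr g * Tm g = (2 : ℝ) • Dm g := by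
  rw [Tm, Dm, Qr, Matrix.fromBlocks_multiply, Matrix.fromBlocks_multiply, Matrix.fromBlocks_smul]
  congr 1 <;> simp [two_smul]

lemma Tm_tr : (Tm g)ᵀ = Tm g := by simp [Tm, Matrix.fromBlocks_transpose]

lemma tl_form (A : Ogg g) : (tl A)ᵀ * Dm g * tl A = Dm g := by
  have : (tl A)ᵀ * Dm g * tl A =
      (1 / 4 : ℝ) • (Tm g * ((rm A)ᵀ * (Tm g * Dm g * Tm g) * rm A) * Tm g) := by
    simp only [tl, Matrix.transpose_smul, Matrix.transpose_mul, Tm_tr, Matrix.smul_mul,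
      Matrix.mul_smul, smul_smul, Matrix.mul_assoc]
    norm_num
  rw [this, TDT, Matrix.mul_smul, Matrix.smul_mul, rm_form, Matrix.mul_smul, Matrix.smul_mul, TQT,
    smul_smul, smul_smul]
  norm_num

lemma tl_mul (A B : Ogg g) : tl (A * B) = tl A * tl B := by
  have h : rm (A * B) = rm A * rm B := by rw [rm, mat_mul, Matrix.map_mul]; rfl
  have : tl A * tl B = (1 / 4 : ℝ) • (Tm g * (rm A * (Tm g * Tm g) * rm B) * Tm g) := by
    simp only [tl, Matrix.smul_mul, Matrix.mul_smul, smul_smul, Matrix.mul_assoc]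
    norm_num
  rw [this, Tm_sq, tl, h]
  simp only [Matrix.smul_mul, Matrix.mul_smul, smul_smul, Matrix.mul_assoc, Matrix.one_mul]
  norm_num

lemma tl_one : tl (1 : Ogg g) = 1 := by
  have : rm (1 : Ogg g) = 1 := by simp [rm]
  rw [tl, this, Matrix.mul_one, two_half]

noncomputable def sgn (g : ℕ) : Ogg g →* SignType where
  toFun A := SignType.sign (tl A).toBlocks₁₁.det
  map_one' := by
    rw [tl_one, ← Matrix.fromBlocks_one, Matrix.toBlocks_fromBlocks₁₁]; simp
  map_mul' A B := by rw [tl_mul, sign_mul_blocks (tl_form A) (tl_form B)]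

def dt (g : ℕ) : Ogg g →* ℤ where
  toFun A := (mat A).det
  map_one' := by simp
  map_mul' A B := by simp

lemma tl_apply (A : Ogg g) (i j : Fin g) : (tl A).toBlocks₁₁ i j =
    (1 / 2 : ℝ) * (mat A (Sum.inl i) (Sum.inl j) + mat A (Sum.inl i) (Sum.inr j) +
      mat A (Sum.inr i) (Sum.inl j) + mat A (Sum.inr i) (Sum.inr j) : ℤ) := by
  have : rm A = Matrix.fromBlocks (rm A).toBlocks₁₁ (rm A).toBlocks₁₂ (rm A).toBlocks₂₁
    (rm A).toBlocks₂₂ := (Matrix.fromBlocks_toBlocks _).symm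
  rw [tl, this, Tm, Matrix.fromBlocks_multiply, Matrix.fromBlocks_multiply,
    Matrix.fromBlocks_smul, Matrix.toBlocks_fromBlocks₁₁]
  simp [rm, Matrix.toBlocks₁₁, Matrix.toBlocks₁₂, Matrix.toBlocks₂₁, Matrix.toBlocks₂₂]
  ring

lemma sgn_s (hg : 3 ≤ g) : sgn g (s hg) = 1 := by
  have : (tl (s hg)).toBlocks₁₁ = 1 := by
    ext i j
    rw [tl_apply]
    have h : ∀ a b, mat (s hg) a b = if sperm hg a = b then 1 else 0 := by
      intro a b
      simp [s, smat, PEquiv.toMatrix_apply, eq_comm]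
    simp only [h]
    by_cases hi : i = ⟨g - 1, by omega⟩
    · have e1 : sperm hg (Sum.inl i) = Sum.inr i := by
        rw [hi]; exact Equiv.swap_apply_left _ _
      have e2 : sperm hg (Sum.inr i) = Sum.inl i := by
        rw [hi]; exact Equiv.swap_apply_right _ _
      rw [e1, e2]
      by_cases hij : i = j
      · subst hij; simp
      · simp [hij]
    · have e1 : sperm hg (Sum.inl i) = Sum.inl i :=
        Equiv.swap_apply_of_ne_of_ne (by simp [lst, hi]) (by simp [lst])
      have e2 : sperm hg (Sum.inr i) = Sum.inr i :=
        Equiv.swap_apply_of_ne_of_ne (by simp [lst]) (by simp [lst, hi])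
      rw [e1, e2]
      by_cases hij : i = j
      · subst hij; simp
      · simp [hij]
  show SignType.sign (tl (s hg)).toBlocks₁₁.det = 1
  rw [this]; simp

lemma sgn_t (hg : 3 ≤ g) : sgn g (t hg) = -1 := by
  have : (tl (t hg)).toBlocks₁₁ =
      Matrix.diagonal (fun i => if i = ⟨g - 1, by omega⟩ then (-1 : ℝ) else 1) := by
    ext i j
    rw [tl_apply]
    simp only [t, mat_mk]
    by_cases hij : i = j
    · subst hij
      by_cases hi : i.val = g - 1
      · simp [eps, idx, Fin.ext_iff, hi]
      · simp [eps, idx, Fin.ext_iff, hi]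
    · simp [hij]
  show SignType.sign (tl (t hg)).toBlocks₁₁.det = -1
  rw [this, Matrix.det_diagonal, Finset.prod_ite_eq']
  simp

lemma dt_s (hg : 3 ≤ g) : dt g (s hg) = -1 := by
  show (smat hg).det = -1
  have : smat hg = (sperm hg).permMatrix ℤ := rfl
  rw [this, Matrix.det_permutation, sperm, Equiv.Perm.sign_swap (ne_swap _)]
  rfl

lemma dt_t (hg : 3 ≤ g) : dt g (t hg) = 1 := by
  show (Matrix.diagonal (eps hg)).det = 1
  rw [Matrix.det_diagonal, Fintype.prod_sum_type, ← Finset.prod_mul_distrib]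
  exact Finset.prod_eq_one fun i _ => eps_sq hg (Sum.inl i)

theorem main (hg : 3 ≤ g) :
    Nonempty (Abelianization (Ogg g) ≃* Multiplicative (ZMod 2 × ZMod 2)) := by
  set a := Abelianization.of (s hg) with ha
  set b := Abelianization.of (t hg) with hb
  have haa : a * a = 1 := by rw [ha, ← map_mul, s_sq, map_one]
  have hbb : b * b = 1 := by rw [hb, ← map_mul, t_sq, map_one]
  let φ := Abelianization.lift (sgn g).toHomUnits
  let ψ := Abelianization.lift (dt g).toHomUnits
  have p1 : φ a = 1 := by ext; simp [φ, ha, sgn_s]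
  have p2 : φ b = -1 := by ext; simp [φ, hb, sgn_t]
  have p3 : ψ a = -1 := by ext; simp [ψ, ha, dt_s]
  have p4 : ψ b = 1 := by ext; simp [ψ, hb, dt_t]
  have nφ : (1 : SignTypeˣ) ≠ -1 := by decide
  have nψ : (1 : ℤˣ) ≠ -1 := by decide
  have n1 : a ≠ 1 := fun h => nψ (by rw [← p3, h, map_one])
  have n2 : b ≠ 1 := fun h => nφ (by rw [← p2, h, map_one])
  have n3 : a ≠ b := fun h => nψ (by rw [← p3, h, p4])
  have n4 : a * b ≠ 1 := fun h => nψ (by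
    have q := congrArg ψ h
    rw [map_mul, p3, p4, mul_one, map_one] at q
    exact q.symm)
  have huniv : (Set.univ : Set (Abelianization (Ogg g))) = ({1, a, b, a * b} : Set _) := by
    ext x
    simpa using ab_cases hg x
  have hcard : Nat.card (Abelianization (Ogg g)) = 4 := by
    rw [← Set.ncard_univ, huniv, Set.ncard_insert_of_notMem, Set.ncard_insert_of_notMem,
      Set.ncard_pair]
    · simpa using n1
    · simpa using ⟨n3, n2⟩
    · simpa using ⟨n1.symm, n2.symm, n4.symm⟩
  have hsq : ∀ x : Abelianization (Ogg g), x ^ 2 = 1 := by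
    intro x
    rw [pow_two]
    rcases ab_cases hg x with h | h | h | h <;> rw [h]
    · simp
    · exact haa
    · exact hbb
    · rw [mul_mul_mul_comm]
      change a * a * (b * b) = 1
      rw [haa, hbb, one_mul]
  have : IsKleinFour (Abelianization (Ogg g)) := by
    refine ⟨hcard, ?_⟩
    have hd := Monoid.exponent_dvd_of_forall_pow_eq_one hsq
    rcases (Nat.dvd_prime Nat.prime_two).mp hd with h | h
    · exfalso
      apply n1
      have := Monoid.pow_exponent_eq_one a
      rwa [h, pow_one] at this
    · exact h
  exact IsKleinFour.nonempty_mulEquiv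

end OggAux

/-- For every `g ≥ 5`, the abelianisation of `O_{g,g}(ℤ)` is isomorphic to
`ℤ/2 × ℤ/2`. -/
theorem abelianization_Ogg (g : ℕ) (hg : 5 ≤ g) :
    Nonempty (Abelianization ↥(Ogg g) ≃* Multiplicative (ZMod 2 × ZMod 2)) := by
  exact OggAux.main (by omega)
end

section
/- For every g ≥ 3, the abelianisation of the group Sp^q_{2g}(ℤ) is a cyclic group of order 4. -/
open Matrix

namespace SpqAux

set_option linter.unusedSimpArgs false

open Sum

variable {g : ℕ}

def act (A : ↥(Spq g)) (v : HypIdx g → ℤ) : HypIdx g → ℤ := A.1.1 *ᵥ v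

def om (v w : HypIdx g → ℤ) : ℤ := ∑ k, (v (inl k) * w (inr k) - v (inr k) * w (inl k))

lemma act_mul (A B : ↥(Spq g)) (v : HypIdx g → ℤ) : act (A * B) v = act A (act B v) := by
  simp [act, Matrix.mulVec_mulVec]

lemma act_one (v : HypIdx g → ℤ) : act (1 : ↥(Spq g)) v = v := by
  simp [act]

lemma act_inv_act (A : ↥(Spq g)) (v : HypIdx g → ℤ) : act A⁻¹ (act A v) = v := by
  rw [← act_mul, inv_mul_cancel, act_one]

lemma act_act_inv (A : ↥(Spq g)) (v : HypIdx g → ℤ) : act A (act A⁻¹ v) = v := by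
  rw [← act_mul, mul_inv_cancel, act_one]

lemma act_ext_single {A B : ↥(Spq g)}
    (h : ∀ c, act A (Pi.single c 1) = act B (Pi.single c 1)) : A = B := by
  apply Subtype.ext
  apply Units.ext
  ext r c
  have := congrFun (h c) r
  simpa [act] using this

lemma act_ext {A B : ↥(Spq g)} (h : ∀ v, act A v = act B v) : A = B :=
  act_ext_single fun _ => h _

lemma om_eq (v w : HypIdx g → ℤ) : om v w = v ⬝ᵥ (Jmat g *ᵥ w) := by
  have : Jmat g *ᵥ w = Sum.elim (fun k => w (inr k)) (fun k => - w (inl k)) := by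
    rw [Jmat, Matrix.fromBlocks_mulVec]
    ext k
    cases k <;> simp [Matrix.neg_mulVec]
  rw [this]
  simp [om, dotProduct, sub_eq_add_neg, Finset.sum_add_distrib]

lemma om_act (A : ↥(Spq g)) (v w : HypIdx g → ℤ) : om (act A v) (act A w) = om v w := by
  have h : A.1.1ᵀ * Jmat g * A.1.1 = Jmat g := A.2.1
  rw [om_eq, om_eq]
  unfold act
  conv_rhs => rw [← h]
  rw [← Matrix.mulVec_mulVec, ← Matrix.mulVec_mulVec, Matrix.mulVec_transpose,
    dotProduct_comm v, ← Matrix.dotProduct_mulVec, dotProduct_comm]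

lemma q_act (A : ↥(Spq g)) (v : HypIdx g → ℤ) : qform g (act A v) = qform g v := A.2.2 v

def mk' (f f' : (HypIdx g → ℤ) →ₗ[ℤ] (HypIdx g → ℤ)) (h1 : ∀ v, f (f' v) = v)
    (h2 : ∀ v, f' (f v) = v) (hom : ∀ v w, om (f v) (f w) = om v w)
    (hq : ∀ v, qform g (f v) = qform g v) : ↥(Spq g) :=
  ⟨⟨LinearMap.toMatrix' f, LinearMap.toMatrix' f', by
      rw [← LinearMap.toMatrix'_comp, show f ∘ₗ f' = LinearMap.id from LinearMap.ext h1,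
        LinearMap.toMatrix'_id], by
      rw [← LinearMap.toMatrix'_comp, show f' ∘ₗ f = LinearMap.id from LinearMap.ext h2,
        LinearMap.toMatrix'_id]⟩, by
    constructor
    · show (LinearMap.toMatrix' f)ᵀ * Jmat g * LinearMap.toMatrix' f = Jmat g
      rw [Matrix.ext_iff_mulVec]
      intro w
      apply dotProduct_eq
      intro v
      have := hom v w
      rw [om_eq, om_eq, ← LinearMap.toMatrix'_mulVec f v, ← LinearMap.toMatrix'_mulVec f w] at this
      rw [dotProduct_comm, dotProduct_comm _ v, ← this,
        ← Matrix.mulVec_mulVec, ← Matrix.mulVec_mulVec, Matrix.mulVec_transpose,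
        dotProduct_comm v, ← Matrix.dotProduct_mulVec, dotProduct_comm]
    · intro v
      show qform g (LinearMap.toMatrix' f *ᵥ v) = _
      rw [LinearMap.toMatrix'_mulVec, hq]⟩

lemma act_mk' (f f' : (HypIdx g → ℤ) →ₗ[ℤ] (HypIdx g → ℤ)) (h1 h2 hom hq) (v : HypIdx g → ℤ) :
    act (mk' f f' h1 h2 hom hq) v = f v := by
  show LinearMap.toMatrix' f *ᵥ v = _
  rw [LinearMap.toMatrix'_mulVec]

/-- The action of the quarter turn in plane `i`. -/
def jF (i : Fin g) (s : ℤ) : (HypIdx g → ℤ) →ₗ[ℤ] (HypIdx g → ℤ) where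
  toFun v := Sum.elim (fun k => if k = i then - s * v (inr k) else v (inl k))
    (fun k => if k = i then s * v (inl k) else v (inr k))
  map_add' v w := by
    ext k; rcases k with k | k <;> simp <;> split_ifs <;> ring
  map_smul' c v := by
    ext k; rcases k with k | k <;> simp <;> split_ifs <;> ring

/-- The action of a short root element. -/
def yF (i j : Fin g) (t : ℤ) : (HypIdx g → ℤ) →ₗ[ℤ] (HypIdx g → ℤ) where
  toFun v := Sum.elim (fun k => v (inl k) + (if k = i then t * v (inr j) else 0)
    + (if k = j then t * v (inr i) else 0)) (fun k => v (inr k))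
  map_add' v w := by
    ext k; rcases k with k | k <;> simp; split_ifs <;> ring
  map_smul' c v := by
    ext k; rcases k with k | k <;> simp; split_ifs <;> ring

lemma jF_inv (i : Fin g) (s : ℤ) (hs : s * s = 1) (v : HypIdx g → ℤ) : jF i s (jF i (-s) v) = v := by
  ext k; rcases k with k | k <;> simp [jF] <;> split_ifs <;> simp [← mul_assoc, hs]

lemma yF_inv (i j : Fin g) (t : ℤ) (v : HypIdx g → ℤ) : yF i j t (yF i j (-t) v) = v := by
  ext k; rcases k with k | k <;> simp [yF]; split_ifs <;> ring

def jE (i : Fin g) : ↥(Spq g) :=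
  mk' (jF i 1) (jF i (-1)) (jF_inv i 1 (by norm_num))
    (fun v => by simpa using jF_inv i (-1) (by norm_num) v)
    (fun v w => by
      apply Finset.sum_congr rfl
      intro k _
      simp [jF]; split_ifs <;> ring)
    (fun v => by
      apply Finset.sum_congr rfl
      intro k _
      simp only [jF, LinearMap.coe_mk, AddHom.coe_mk, Sum.elim_inl, Sum.elim_inr]
      split_ifs
      · have : ((-1 * v (inr k) * (1 * v (inl k)) : ℤ)) = - (v (inl k) * v (inr k)) := by ring
        rw [this, Int.cast_neg, ZMod.neg_eq_self_mod_two]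
      · rfl)

def yE (i j : Fin g) (t : ℤ) : ↥(Spq g) :=
  mk' (yF i j t) (yF i j (-t)) (yF_inv i j t)
    (fun v => by simpa using yF_inv i j (-t) v)
    (fun v w => by
      have : ∀ k, yF i j t v (inl k) * yF i j t w (inr k) - yF i j t v (inr k) * yF i j t w (inl k)
        = (v (inl k) * w (inr k) - v (inr k) * w (inl k)) +
          ((if k = i then t * v (inr j) * w (inr k) - t * w (inr j) * v (inr k) else 0) +
          (if k = j then t * v (inr i) * w (inr k) - t * w (inr i) * v (inr k) else 0)) := by
        intro k
        simp [yF]; split_ifs <;> ring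
      unfold om
      rw [Finset.sum_congr rfl fun k _ => this k, Finset.sum_add_distrib, Finset.sum_add_distrib]
      simp
      ring)
    (fun v => by
      have : ∀ k, (((yF i j t v (inl k) * yF i j t v (inr k) : ℤ)) : ZMod 2)
        = ((v (inl k) * v (inr k) : ℤ) : ZMod 2) +
          ((if k = i then ((t * v (inr j) * v (inr k) : ℤ) : ZMod 2) else 0) +
          (if k = j then ((t * v (inr i) * v (inr k) : ℤ) : ZMod 2) else 0)) := by
        intro k
        simp [yF]; split_ifs <;> ring
      unfold qform
      rw [Finset.sum_congr rfl fun k _ => this k, Finset.sum_add_distrib, Finset.sum_add_distrib]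
      simp only [Finset.sum_ite_eq', Finset.mem_univ, if_true]
      rw [show t * v (inr i) * v (inr j) = t * v (inr j) * v (inr i) by ring, CharTwo.add_self_eq_zero,
        add_zero])

lemma act_jE_inl (i : Fin g) (v : HypIdx g → ℤ) (k : Fin g) :
    act (jE i) v (inl k) = if k = i then - v (inr k) else v (inl k) := by
  exact (congrFun (act_mk' _ _ _ _ _ _ v) _).trans (by simp [jF])

lemma act_jE_inr (i : Fin g) (v : HypIdx g → ℤ) (k : Fin g) :
    act (jE i) v (inr k) = if k = i then v (inl k) else v (inr k) := by
  exact (congrFun (act_mk' _ _ _ _ _ _ v) _).trans (by simp [jF])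

lemma act_yE_inl (i j : Fin g) (t : ℤ) (v : HypIdx g → ℤ) (k : Fin g) :
    act (yE i j t) v (inl k) = v (inl k) + (if k = i then t * v (inr j) else 0)
    + (if k = j then t * v (inr i) else 0) := by
  rw [yE, act_mk']; simp [yF]

lemma act_yE_inr (i j : Fin g) (t : ℤ) (v : HypIdx g → ℤ) (k : Fin g) :
    act (yE i j t) v (inr k) = v (inr k) := by
  rw [yE, act_mk']; simp [yF]

lemma act_jE_inv_inl (i : Fin g) (v : HypIdx g → ℤ) (k : Fin g) :
    act (jE i)⁻¹ v (inl k) = if k = i then v (inr k) else v (inl k) := by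
  have h1 := act_jE_inl i (act (jE i)⁻¹ v) k
  have h2 := act_jE_inr i (act (jE i)⁻¹ v) k
  rw [act_act_inv] at h1 h2
  split_ifs at * <;> linarith

lemma act_jE_inv_inr (i : Fin g) (v : HypIdx g → ℤ) (k : Fin g) :
    act (jE i)⁻¹ v (inr k) = if k = i then - v (inl k) else v (inr k) := by
  have h1 := act_jE_inl i (act (jE i)⁻¹ v) k
  have h2 := act_jE_inr i (act (jE i)⁻¹ v) k
  rw [act_act_inv] at h1 h2
  split_ifs at * <;> linarith

def xE (i j : Fin g) (t : ℤ) : ↥(Spq g) := (jE j)⁻¹ * yE i j t * jE j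

def zE (i j : Fin g) (t : ℤ) : ↥(Spq g) := (jE i)⁻¹ * (jE j)⁻¹ * yE i j (-t) * jE j * jE i

lemma act_xE_inl {i j : Fin g} (hij : i ≠ j) (t : ℤ) (v : HypIdx g → ℤ) (k : Fin g) :
    act (xE i j t) v (inl k) = v (inl k) + (if k = i then t * v (inl j) else 0) := by
  simp only [xE, act_mul, act_jE_inl, act_jE_inr, act_yE_inl, act_yE_inr, act_jE_inv_inl,
    act_jE_inv_inr]
  by_cases h : k = j
  · subst h; simp [hij.symm]
  · simp [h]

lemma act_xE_inr {i j : Fin g} (hij : i ≠ j) (t : ℤ) (v : HypIdx g → ℤ) (k : Fin g) :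
    act (xE i j t) v (inr k) = v (inr k) - (if k = j then t * v (inr i) else 0) := by
  simp only [xE, act_mul, act_jE_inl, act_jE_inr, act_yE_inl, act_yE_inr, act_jE_inv_inl,
    act_jE_inv_inr]
  by_cases h : k = j
  · subst h; simp [hij.symm, hij]; ring
  · simp [h]

lemma act_zE_inl {i j : Fin g} (hij : i ≠ j) (t : ℤ) (v : HypIdx g → ℤ) (k : Fin g) :
    act (zE i j t) v (inl k) = v (inl k) := by
  simp only [zE, act_mul, act_jE_inl, act_jE_inr, act_yE_inl, act_yE_inr, act_jE_inv_inl,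
    act_jE_inv_inr]
  by_cases h : k = j
  · subst h; simp [hij.symm]
  · by_cases h' : k = i
    · subst h'; simp [hij]
    · simp [h, h']

lemma act_zE_inr {i j : Fin g} (hij : i ≠ j) (t : ℤ) (v : HypIdx g → ℤ) (k : Fin g) :
    act (zE i j t) v (inr k) = v (inr k) + (if k = i then t * v (inl j) else 0)
      + (if k = j then t * v (inl i) else 0) := by
  simp only [zE, act_mul, act_jE_inl, act_jE_inr, act_yE_inl, act_yE_inr, act_jE_inv_inl,
    act_jE_inv_inr]
  by_cases h : k = j
  · subst h; simp [hij.symm, hij]; ring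
  · by_cases h' : k = i
    · subst h'; simp [hij, hij.symm]; ring
    · simp [h, h']

/-- Generated subgroup. -/
def HH (g : ℕ) : Subgroup ↥(Spq g) :=
  Subgroup.closure ({A | ∃ i, A = jE i} ∪ {A | ∃ i j t, i ≠ j ∧ A = yE i j t})

lemma jE_mem (i : Fin g) : jE i ∈ HH g := Subgroup.subset_closure (Or.inl ⟨i, rfl⟩)
lemma yE_mem {i j : Fin g} (h : i ≠ j) (t : ℤ) : yE i j t ∈ HH g :=
  Subgroup.subset_closure (Or.inr ⟨i, j, t, h, rfl⟩)
lemma xE_mem {i j : Fin g} (h : i ≠ j) (t : ℤ) : xE i j t ∈ HH g :=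
  mul_mem (mul_mem (inv_mem (jE_mem _)) (yE_mem h t)) (jE_mem _)
lemma zE_mem {i j : Fin g} (h : i ≠ j) (t : ℤ) : zE i j t ∈ HH g :=
  mul_mem (mul_mem (mul_mem (mul_mem (inv_mem (jE_mem _)) (inv_mem (jE_mem _))) (yE_mem h _))
    (jE_mem _)) (jE_mem _)

lemma vec_ext {v w : HypIdx g → ℤ} (h1 : ∀ k, v (inl k) = w (inl k))
    (h2 : ∀ k, v (inr k) = w (inr k)) : v = w := by
  ext k; cases k
  · exact h1 _
  · exact h2 _

lemma uE_exists (hg : 2 ≤ g) (i : Fin g) (t : ℤ) : ∃ h ∈ HH g, ∀ v,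
    (∀ k, act h v (inl k) = v (inl k) + (if k = i then 2 * t * v (inr i) else 0)) ∧
    (∀ k, act h v (inr k) = v (inr k)) := by
  have : Nontrivial (Fin g) := Fin.nontrivial_iff_two_le.mpr hg
  obtain ⟨j, hj⟩ := exists_ne i
  refine ⟨xE i j 1 * yE i j t * xE i j (-1) * yE i j (-t),
    mul_mem (mul_mem (mul_mem (xE_mem hj.symm _) (yE_mem hj.symm _)) (xE_mem hj.symm _))
      (yE_mem hj.symm _), fun v => ⟨fun k => ?_, fun k => ?_⟩⟩
  · simp only [act_mul, act_xE_inl hj.symm, act_xE_inr hj.symm, act_yE_inl, act_yE_inr]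
    by_cases h : k = i
    · subst h; simp [hj, hj.symm]; ring
    · by_cases h' : k = j
      · subst h'; simp [hj, hj.symm]; try ring
      · simp [h, h']
  · simp only [act_mul, act_xE_inl hj.symm, act_xE_inr hj.symm, act_yE_inl, act_yE_inr]
    by_cases h' : k = j
    · subst h'; simp [hj, hj.symm]
    · simp [h']

lemma vE_exists (hg : 2 ≤ g) (i : Fin g) (t : ℤ) : ∃ h ∈ HH g, ∀ v,
    (∀ k, act h v (inl k) = v (inl k)) ∧
    (∀ k, act h v (inr k) = v (inr k) + (if k = i then 2 * t * v (inl i) else 0)) := by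
  obtain ⟨h, hh, hv⟩ := uE_exists hg i (-t)
  refine ⟨(jE i)⁻¹ * h * jE i, mul_mem (mul_mem (inv_mem (jE_mem _)) hh) (jE_mem _),
    fun v => ⟨fun k => ?_, fun k => ?_⟩⟩
  · simp only [act_mul, act_jE_inv_inl, (hv _).1, (hv _).2, act_jE_inl, act_jE_inr]
    by_cases h : k = i <;> simp [h]
  · simp only [act_mul, act_jE_inv_inr, (hv _).1, (hv _).2, act_jE_inl, act_jE_inr]
    by_cases h : k = i <;> simp [h]
    ring

def Fx (S : Finset (Fin g)) (A : ↥(Spq g)) : Prop :=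
  ∀ i ∉ S, ∀ v, act A v (inl i) = v (inl i) ∧ act A v (inr i) = v (inr i)

lemma Fx_mul {S : Finset (Fin g)} {A B : ↥(Spq g)} (hA : Fx S A) (hB : Fx S B) : Fx S (A * B) := by
  intro i hi v
  rw [act_mul, (hA i hi _).1, (hA i hi _).2]
  exact hB i hi v

lemma Fx_one (S : Finset (Fin g)) : Fx S (1 : ↥(Spq g)) := fun i _ v => by simp [act_one]

lemma om_inl (v : HypIdx g → ℤ) (a : Fin g) : om (Pi.single (inl a) 1) v = v (inr a) := by
  simp [om, Pi.single_apply]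

lemma om_inr (v : HypIdx g → ℤ) (a : Fin g) : om (Pi.single (inr a) 1) v = - v (inl a) := by
  simp [om, Pi.single_apply]

lemma Fx_J {S : Finset (Fin g)} {i : Fin g} (hi : i ∈ S) : Fx S (jE i) := by
  intro k hk v
  have : k ≠ i := fun h => hk (h ▸ hi)
  simp [act_jE_inl, act_jE_inr, this]

lemma Fx_Y {S : Finset (Fin g)} {i j : Fin g} (hi : i ∈ S) (hj : j ∈ S) (t : ℤ) :
    Fx S (yE i j t) := by
  intro k hk v
  have : k ≠ i := fun h => hk (h ▸ hi)
  have : k ≠ j := fun h => hk (h ▸ hj)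
  simp [act_yE_inl, act_yE_inr, *]

lemma Fx_X {S : Finset (Fin g)} {i j : Fin g} (hi : i ∈ S) (hj : j ∈ S) (hij : i ≠ j) (t : ℤ) :
    Fx S (xE i j t) := by
  intro k hk v
  have : k ≠ i := fun h => hk (h ▸ hi)
  have : k ≠ j := fun h => hk (h ▸ hj)
  simp [act_xE_inl hij, act_xE_inr hij, *]

lemma Fx_Z {S : Finset (Fin g)} {i j : Fin g} (hi : i ∈ S) (hj : j ∈ S) (hij : i ≠ j) (t : ℤ) :
    Fx S (zE i j t) := by
  intro k hk v
  have : k ≠ i := fun h => hk (h ▸ hi)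
  have : k ≠ j := fun h => hk (h ▸ hj)
  simp [act_zE_inl hij, act_zE_inr hij, *]

lemma kill (x y : ℤ) (hy : y ≠ 0) (H : ∀ t : ℤ, (x + t * y).natAbs < y.natAbs → x + t * y = 0) :
    ∃ t, x + t * y = 0 := by
  refine ⟨-(x / y), H _ ?_⟩
  have : x + -(x / y) * y = x % y := by rw [Int.emod_def]; ring
  rw [this]
  have h1 := Int.emod_nonneg x hy
  have h2 := Int.emod_lt_abs x hy
  rw [Int.abs_eq_natAbs] at h2
  omega

lemma kill2 (x y : ℤ) (hy : y ≠ 0) : ∃ t, (x + 2 * t * y).natAbs ≤ y.natAbs := by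
  have h1 := Int.emod_nonneg x (show 2 * y ≠ 0 by omega)
  have h2 := Int.emod_lt_abs x (show 2 * y ≠ 0 by omega)
  rw [Int.abs_eq_natAbs] at h2
  have h3 : x + 2 * (-(x / (2 * y))) * y = x % (2 * y) := by rw [Int.emod_def]; ring
  by_cases h : x % (2 * y) ≤ (y.natAbs : ℤ)
  · exact ⟨_, by rw [h3]; omega⟩
  · rcases lt_or_gt_of_ne hy with hy' | hy'
    · refine ⟨-(x / (2 * y)) + 1, ?_⟩
      rw [show x + 2 * (-(x / (2 * y)) + 1) * y = x + 2 * (-(x / (2 * y))) * y + 2 * y by ring, h3]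
      omega
    · refine ⟨-(x / (2 * y)) - 1, ?_⟩
      rw [show x + 2 * (-(x / (2 * y)) - 1) * y = x + 2 * (-(x / (2 * y))) * y - 2 * y by ring, h3]
      omega

lemma step1 (hg : 2 ≤ g) (S : Finset (Fin g)) (a : Fin g) (ha : a ∉ S) (A : ↥(Spq g))
    (hA : Fx (insert a S) A) :
    ∃ h ∈ HH g, Fx (insert a S) h ∧ act (h * A) (Pi.single (inl a) 1) = Pi.single (inl a) 1 := by
  classical
  set v := act A (Pi.single (inl a) 1) with hv
  let Orb : (HypIdx g → ℤ) → Prop := fun w => ∃ h ∈ HH g, Fx (insert a S) h ∧ act h v = w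
  have haS : a ∈ insert a S := Finset.mem_insert_self _ _
  have orb_cl : ∀ h ∈ HH g, Fx (insert a S) h → ∀ w, Orb w → Orb (act h w) := by
    rintro h hh hf w ⟨h', hh', hf', rfl⟩
    exact ⟨h * h', mul_mem hh hh', Fx_mul hf hf', by rw [act_mul]⟩
  have orb_supp : ∀ w, Orb w → ∀ i ∉ insert a S, w (inl i) = 0 ∧ w (inr i) = 0 := by
    rintro w ⟨h, hh, hf, rfl⟩ i hi
    rw [(hf i hi _).1, (hf i hi _).2, hv, (hA i hi _).1, (hA i hi _).2]
    have : i ≠ a := fun h => hi (h ▸ haS)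
    simp [Pi.single_apply, this]
  have orb_q : ∀ w, Orb w → qform g w = 0 := by
    rintro w ⟨h, hh, hf, rfl⟩
    rw [q_act, hv, q_act]
    simp [qform]
  have orb_dvd : ∀ w, Orb w → ∀ d : ℤ, (∀ c, d ∣ w c) → d ∣ 1 := by
    rintro w ⟨h, hh, hf, rfl⟩ d hd
    have h1 : om (act h v) (act h (act A (Pi.single (inr a) 1))) = 1 := by
      rw [om_act, hv, om_act, om_inl]; simp
    rw [← h1]
    apply Finset.dvd_sum
    intro k _
    exact dvd_sub ((hd _).mul_right _) ((hd _).mul_right _)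
  have hex : ∃ n : ℕ, 0 < n ∧ ∃ w, Orb w ∧ ∃ c, (w c).natAbs = n := by
    have h0 : Orb v := ⟨1, one_mem _, Fx_one _, act_one _⟩
    by_contra hcon
    have : ∀ c, (0 : ℤ) ∣ v c := by
      intro c
      by_contra hc
      have : v c ≠ 0 := fun h => hc (by rw [h])
      exact hcon ⟨(v c).natAbs, Int.natAbs_pos.mpr this, v, h0, c, rfl⟩
    have := orb_dvd v h0 0 this
    omega
  set d := Nat.find hex with hd
  obtain ⟨hdpos, w0, hw0, c0, hc0⟩ := Nat.find_spec hex
  rw [← hd] at hdpos hc0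
  have hmin : ∀ w, Orb w → ∀ c, (w c).natAbs < d → w c = 0 := by
    intro w hw c hlt
    by_contra hne
    exact Nat.find_min hex hlt ⟨Int.natAbs_pos.mpr hne, w, hw, c, rfl⟩
  -- move to an `inl` coordinate
  have s1 : ∃ w, Orb w ∧ ∃ b, (w (inl b)).natAbs = d := by
    rcases c0 with b | b
    · exact ⟨w0, hw0, b, hc0⟩
    · have hb : b ∈ insert a S := by
        by_contra hb
        rw [(orb_supp w0 hw0 b hb).2] at hc0
        simp at hc0; omega
      refine ⟨act (jE b) w0, orb_cl _ (jE_mem _) (Fx_J hb) _ hw0, b, ?_⟩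
      rw [act_jE_inl]; simpa using hc0
  obtain ⟨w1, hw1, b, hb⟩ := s1
  have s2 : ∃ w, Orb w ∧ (w (inl a)).natAbs = d := by
    by_cases hba : a = b
    · exact ⟨w1, hw1, hba ▸ hb⟩
    · have hbS : b ∈ insert a S := by
        by_contra hbS
        rw [(orb_supp w1 hw1 b hbS).1] at hb
        simp at hb; omega
      have hcl : ∀ t, Orb (act (xE a b t) w1) :=
        fun t => orb_cl _ (xE_mem hba _) (Fx_X haS hbS hba _) _ hw1
      have hform : ∀ t, act (xE a b t) w1 (inl a) = w1 (inl a) + t * w1 (inl b) := by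
        intro t; rw [act_xE_inl hba]; simp
      obtain ⟨t, ht⟩ := kill (w1 (inl a)) (w1 (inl b)) (by intro h; rw [h] at hb; simp at hb; omega)
        (by
          intro t ht
          rw [hb, ← hform] at ht
          rw [← hform]
          exact hmin _ (hcl t) _ ht)
      refine ⟨_, hcl (t + 1), ?_⟩
      rw [hform, show w1 (inl a) + (t + 1) * w1 (inl b) = (w1 (inl a) + t * w1 (inl b)) + w1 (inl b) by
        ring, ht, zero_add, hb]
  have s3 : ∀ T : Finset (Fin g), T ⊆ S → ∃ w, Orb w ∧ (w (inl a)).natAbs = d ∧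
      ∀ c ∈ T, w (inl c) = 0 ∧ w (inr c) = 0 := by
    intro T
    induction T using Finset.induction_on with
    | empty => intro _; obtain ⟨w, h1, h2⟩ := s2; exact ⟨w, h1, h2, by simp⟩
    | insert c T hcT ih =>
      intro hT
      obtain ⟨w, h1, h2, h3⟩ := ih (fun x hx => hT (Finset.mem_insert_of_mem hx))
      have hcS : c ∈ S := hT (Finset.mem_insert_self _ _)
      have hca : c ≠ a := fun h => ha (h ▸ hcS)
      have hcS' : c ∈ insert a S := Finset.mem_insert_of_mem hcS
      have hne : ∀ w : HypIdx g → ℤ, (w (inl a)).natAbs = d → w (inl a) ≠ 0 := by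
        intro w hw h; rw [h] at hw; simp at hw; omega
      have hTa : a ∉ T := fun h => ha (hT (Finset.mem_insert_of_mem h))
      -- first kill inl c
      have hcl : ∀ t, Orb (act (xE c a t) w) :=
        fun t => orb_cl _ (xE_mem hca _) (Fx_X hcS' haS hca _) _ h1
      have hform : ∀ t, act (xE c a t) w (inl c) = w (inl c) + t * w (inl a) := by
        intro t; rw [act_xE_inl hca]; simp
      obtain ⟨t, ht⟩ := kill (w (inl c)) (w (inl a)) (hne w h2)
        (by
          intro t ht
          rw [h2, ← hform] at ht
          rw [← hform]
          exact hmin _ (hcl t) _ ht)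
      set w' := act (xE c a t) w with hw'
      have h1' : Orb w' := hcl t
      have h2' : (w' (inl a)).natAbs = d := by
        rw [hw', act_xE_inl hca, if_neg hca.symm, add_zero, h2]
      have hc' : w' (inl c) = 0 := by rw [hw', hform, ht]
      have h3' : ∀ c ∈ T, w' (inl c) = 0 ∧ w' (inr c) = 0 := by
        intro k hk
        have hkc : k ≠ c := fun h => hcT (h ▸ hk)
        have hka : k ≠ a := fun h => hTa (h ▸ hk)
        rw [hw', act_xE_inl hca, act_xE_inr hca, if_neg hkc, if_neg hka]
        simpa using h3 k hk
      have hcl2 : ∀ t, Orb (act (zE c a t) w') :=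
        fun t => orb_cl _ (zE_mem hca _) (Fx_Z hcS' haS hca _) _ h1'
      have hform2 : ∀ t, act (zE c a t) w' (inr c) = w' (inr c) + t * w' (inl a) := by
        intro t; rw [act_zE_inr hca]; simp [hca]
      obtain ⟨t', ht'⟩ := kill (w' (inr c)) (w' (inl a)) (hne w' h2')
        (by
          intro t ht
          rw [h2', ← hform2] at ht
          rw [← hform2]
          exact hmin _ (hcl2 t) _ ht)
      refine ⟨_, hcl2 t', by rw [act_zE_inl hca, h2'], ?_⟩
      intro k hk
      rcases Finset.mem_insert.mp hk with rfl | hk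
      · rw [act_zE_inl hca, hform2]; exact ⟨hc', ht'⟩
      · have hkc : k ≠ c := fun h => hcT (h ▸ hk)
        have hka : k ≠ a := fun h => hTa (h ▸ hk)
        rw [act_zE_inl hca, act_zE_inr hca, if_neg hkc, if_neg hka]
        simpa using h3' k hk
  obtain ⟨w, h1, h2, h3⟩ := s3 S (Finset.Subset.refl _)
  have hne : w (inl a) ≠ 0 := by intro h; rw [h] at h2; simp at h2; omega
  obtain ⟨t, ht⟩ := kill2 (w (inr a)) (w (inl a)) hne
  obtain ⟨h, hh, hact⟩ := vE_exists hg a t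
  have hFh : Fx (insert a S) h := by
    intro k hk u
    have : k ≠ a := fun h => hk (h ▸ haS)
    simp [(hact u).1, (hact u).2, this]
  set u := act h w with hu
  have hO : Orb u := orb_cl h hh hFh w h1
  have hua : (u (inl a)).natAbs = d := by rw [hu, (hact w).1, h2]
  have hub : (u (inr a)).natAbs ≤ d := by
    rw [hu, (hact w).2, if_pos rfl, ← h2]; exact ht
  have huz : ∀ k, k ≠ a → u (inl k) = 0 ∧ u (inr k) = 0 := by
    intro k hk
    by_cases hkS : k ∈ insert a S
    · have := (Finset.mem_insert.mp hkS).resolve_left hk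
      rw [hu, (hact w).1, (hact w).2, if_neg hk, add_zero]
      exact h3 k this
    · exact orb_supp u hO k hkS
  have hr : (u (inr a)).natAbs = 0 ∨ (u (inr a)).natAbs = d := by
    rcases lt_or_eq_of_le hub with h | h
    · left; rw [hmin u hO _ h]; rfl
    · right; exact h
  have hd1 : d = 1 := by
    have : (d : ℤ) ∣ 1 := by
      apply orb_dvd u hO
      rintro (k | k)
      · by_cases hk : k = a
        · subst hk; rw [← hua]; exact Int.natAbs_dvd.mpr dvd_rfl
        · rw [(huz k hk).1]; exact dvd_zero _
      · by_cases hk : k = a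
        · subst hk
          rcases hr with h | h
          · rw [Int.natAbs_eq_zero.mp h]; exact dvd_zero _
          · rw [← h]; exact Int.natAbs_dvd.mpr dvd_rfl
        · rw [(huz k hk).2]; exact dvd_zero _
    have := Int.natAbs_dvd_natAbs.mpr this
    simpa using this
  have hq := orb_q u hO
  have hq' : qform g u = ((u (inl a) * u (inr a) : ℤ) : ZMod 2) := by
    unfold qform
    apply Finset.sum_eq_single a
    · intro k _ hk; simp [huz k hk]
    · simp
  rw [hq', ZMod.intCast_zmod_eq_zero_iff_dvd] at hq
  have hr0 : u (inr a) = 0 := by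
    rcases hr with h | h
    · exact Int.natAbs_eq_zero.mp h
    · exfalso
      rw [hd1] at h hua
      have := Int.natAbs_mul (u (inl a)) (u (inr a))
      rw [h, hua] at this
      push_cast at hq
      omega
  rw [hd1] at hua
  rcases Int.natAbs_eq_iff.mp hua with hs | hs
  · obtain ⟨h', hh', hf', he⟩ := hO
    refine ⟨h', hh', hf', ?_⟩
    rw [act_mul, ← hv, he]
    apply vec_ext
    · intro k
      by_cases hk : k = a
      · subst hk; simp [hs]
      · simp [huz k hk, Pi.single_apply, hk]
    · intro k
      by_cases hk : k = a
      · subst hk; simp [hr0]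
      · simp [huz k hk, Pi.single_apply]
  · obtain ⟨h', hh', hf', he⟩ := orb_cl _ (jE_mem a) (Fx_J haS) _
      (orb_cl _ (jE_mem a) (Fx_J haS) _ hO)
    refine ⟨h', hh', hf', ?_⟩
    rw [act_mul, ← hv, he]
    apply vec_ext
    · intro k
      rw [act_jE_inl, act_jE_inr]
      by_cases hk : k = a
      · subst hk; simp [hs]
      · simp [act_jE_inl, huz k hk, Pi.single_apply, hk]
    · intro k
      rw [act_jE_inr, act_jE_inl]
      by_cases hk : k = a
      · subst hk; simp [hr0]
      · simp [act_jE_inr, huz k hk, Pi.single_apply, hk]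

lemma step2 (hg : 2 ≤ g) (S : Finset (Fin g)) (a : Fin g) (ha : a ∉ S) (A : ↥(Spq g))
    (hA : Fx (insert a S) A) (hAe : act A (Pi.single (inl a) 1) = Pi.single (inl a) 1) :
    ∃ h ∈ HH g, Fx S (h * A) := by
  classical
  have haS : a ∈ insert a S := Finset.mem_insert_self _ _
  let P : ↥(Spq g) → Prop := fun B => (∃ h ∈ HH g, B = h * A) ∧ Fx (insert a S) B ∧
    act B (Pi.single (inl a) 1) = Pi.single (inl a) 1
  have P_cl : ∀ h ∈ HH g, Fx (insert a S) h →
      act h (Pi.single (inl a) 1) = Pi.single (inl a) 1 → ∀ B, P B → P (h * B) := by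
    rintro h hh hf he B ⟨⟨h', hh', rfl⟩, hB, hBe⟩
    refine ⟨⟨h * h', mul_mem hh hh', by rw [mul_assoc]⟩, Fx_mul hf hB, ?_⟩
    rw [act_mul, hBe, he]
  have P_one : ∀ B, P B → act B (Pi.single (inr a) 1) (inr a) = 1 := by
    rintro B ⟨_, _, hBe⟩
    have h5 : om (act B (Pi.single (inl a) 1)) (act B (Pi.single (inr a) 1)) = 1 := by
      rw [om_act, om_inl]; simp
    rwa [hBe, om_inl] at h5
  have s3 : ∀ T : Finset (Fin g), T ⊆ S → ∃ B, P B ∧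
      ∀ c ∈ T, act B (Pi.single (inr a) 1) (inl c) = 0 ∧ act B (Pi.single (inr a) 1) (inr c) = 0 := by
    intro T
    induction T using Finset.induction_on with
    | empty => intro _; exact ⟨A, ⟨⟨1, one_mem _, by simp⟩, hA, hAe⟩, by simp⟩
    | insert c T hcT ih =>
      intro hT
      obtain ⟨B, h1, h3⟩ := ih (fun x hx => hT (Finset.mem_insert_of_mem hx))
      have hcS : c ∈ S := hT (Finset.mem_insert_self _ _)
      have hca : a ≠ c := fun h => ha (h ▸ hcS)
      have hcS' : c ∈ insert a S := Finset.mem_insert_of_mem hcS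
      have hTa : a ∉ T := fun h => ha (hT (Finset.mem_insert_of_mem h))
      set w := act B (Pi.single (inr a) 1) with hw
      have h1' := P_cl _ (xE_mem hca (w (inr c))) (Fx_X haS hcS' hca _) (by
        apply vec_ext <;> intro k
        · rw [act_xE_inl hca]; simp [hca.symm]
        · rw [act_xE_inr hca]; simp) B h1
      have h1'' := P_cl _ (yE_mem hca (-w (inl c))) (Fx_Y haS hcS' _) (by
        apply vec_ext <;> intro k
        · rw [act_yE_inl]; simp
        · rw [act_yE_inr]) _ h1'
      have hwa : w (inr a) = 1 := P_one B h1
      refine ⟨_, h1'', ?_⟩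
      intro k hk
      rw [act_mul, act_mul, ← hw, act_yE_inl, act_yE_inr, act_xE_inl hca, act_xE_inr hca,
        act_xE_inr hca, act_xE_inr hca, if_neg hca, hwa]
      rcases Finset.mem_insert.mp hk with rfl | hk
      · simp [hca.symm, hwa]
      · have hkc : k ≠ c := fun h => hcT (h ▸ hk)
        have hka : k ≠ a := fun h => hTa (h ▸ hk)
        simpa [hkc, hka] using h3 k hk
  obtain ⟨B, h1, h3⟩ := s3 S (Finset.Subset.refl _)
  have hone := P_one B h1
  set w := act B (Pi.single (inr a) 1) with hw
  have hz : ∀ k, k ≠ a → w (inl k) = 0 ∧ w (inr k) = 0 := by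
    intro k hk
    by_cases hkS : k ∈ insert a S
    · exact h3 k ((Finset.mem_insert.mp hkS).resolve_left hk)
    · rw [hw, (h1.2.1 k hkS _).1, (h1.2.1 k hkS _).2]
      simp [Pi.single_apply, hk]
  have hq : qform g w = 0 := by
    rw [hw, q_act]; simp [qform]
  have hq' : qform g w = ((w (inl a) * w (inr a) : ℤ) : ZMod 2) := by
    unfold qform
    apply Finset.sum_eq_single a
    · intro k _ hk; simp [hz k hk]
    · simp
  rw [hq', ZMod.intCast_zmod_eq_zero_iff_dvd, hone, mul_one] at hq
  obtain ⟨m, hm⟩ := hq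
  obtain ⟨h, hh, hact⟩ := uE_exists hg a (-m)
  have hFh : Fx (insert a S) h := by
    intro k hk u
    have : k ≠ a := fun h => hk (h ▸ haS)
    simp [(hact u).1, (hact u).2, this]
  have hP := P_cl h hh hFh (by
    apply vec_ext <;> intro k
    · rw [(hact _).1]; simp
    · rw [(hact _).2]) B h1
  have hf : act (h * B) (Pi.single (inr a) 1) = Pi.single (inr a) 1 := by
    rw [act_mul, ← hw]
    apply vec_ext <;> intro k
    · rw [(hact _).1]
      by_cases hk : k = a
      · subst hk; simp [hone, hm]
      · simp [hk, hz k hk]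
    · rw [(hact _).2]
      by_cases hk : k = a
      · subst hk; simp [hone]
      · simp [hk, hz k hk, Pi.single_apply]
  obtain ⟨⟨h', hh', he'⟩, hF, he⟩ := hP
  refine ⟨h', hh', ?_⟩
  rw [← he']
  intro k hk v
  by_cases hka : k = a
  · subst hka
    constructor
    · have h5 : om (Pi.single (inr k) 1) (act (h * B) v) = om (Pi.single (inr k) 1) v := by
        conv_lhs => rw [← hf]
        rw [om_act]
      rw [om_inr, om_inr] at h5
      linarith
    · have h5 : om (Pi.single (inl k) 1) (act (h * B) v) = om (Pi.single (inl k) 1) v := by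
        conv_lhs => rw [← he]
        rw [om_act]
      rwa [om_inl, om_inl] at h5
  · exact hF k (by simp [hka, hk]) v

lemma gen_aux (hg : 2 ≤ g) (S : Finset (Fin g)) : ∀ A : ↥(Spq g), Fx S A → A ∈ HH g := by
  classical
  induction S using Finset.induction_on with
  | empty =>
    intro A hA
    have : A = 1 := act_ext fun v => by
      rw [act_one]
      exact vec_ext (fun k => (hA k (by simp) v).1) (fun k => (hA k (by simp) v).2)
    rw [this]; exact one_mem _
  | insert a S ha ih =>
    intro A hA
    obtain ⟨h, hh, hf, he⟩ := step1 hg S a ha A hA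
    obtain ⟨h', hh', hf'⟩ := step2 hg S a ha (h * A) (Fx_mul hf hA) he
    have := ih _ hf'
    rwa [Subgroup.mul_mem_cancel_left _ hh', Subgroup.mul_mem_cancel_left _ hh] at this

lemma gen (hg : 2 ≤ g) : HH g = ⊤ := by
  rw [eq_top_iff]
  intro A _
  exact gen_aux hg Finset.univ A (fun i hi => absurd (Finset.mem_univ i) hi)

lemma z4_odd_of_mul : ∀ x y : ZMod 4, 2 * (x * y) = 2 → 2 * x = 2 ∧ 2 * y = 2 := by decide
lemma z4_mul_odd : ∀ x y : ZMod 4, 2 * x = 2 → 2 * y = 2 → 2 * (x * y) = 2 := by decide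
lemma z4_odd_sq : ∀ x : ZMod 4, 2 * x = 2 → x * x = 1 := by decide
lemma z4_even_or : ∀ x : ZMod 4, 2 * x = 2 ∨ 2 * x = 0 := by decide
lemma z4_two_mul : ∀ x : ZMod 4, 2 * x + 2 * x = 0 := by decide

lemma z4_even_mul : ∀ x y : ZMod 4, 2 * x = 0 → 2 * y = 0 → x * y = 0 := by decide
lemma z4_neg_odd : ∀ x : ZMod 4, 2 * x = 2 → 2 * -x = 2 := by decide
lemma z4_sq_one : ∀ t x : ZMod 4, 2 * x = 0 → (1 + t * x) * (1 + t * x) = 1 := by decide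
lemma z4_four : ∀ c : ZMod 4, c = c + 1 + 1 + 1 + 1 := by decide

def Mm (S : Finset (Fin g)) (A : ↥(Spq g)) : Matrix (Fin g) (Fin g) (ZMod 4) :=
  Matrix.of fun r k => if k ∈ S then ((act A (Pi.single (inl r) 1) (inr k) : ℤ) : ZMod 4)
    else ((act A (Pi.single (inl r) 1) (inl k) : ℤ) : ZMod 4)

def Ww (S : Finset (Fin g)) (A : ↥(Spq g)) : Matrix (Fin g) (Fin g) (ZMod 4) :=
  Matrix.of fun r k => if k ∈ S then -((act A (Pi.single (inl r) 1) (inl k) : ℤ) : ZMod 4)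
    else ((act A (Pi.single (inl r) 1) (inr k) : ℤ) : ZMod 4)

lemma MW_symm (S : Finset (Fin g)) (A : ↥(Spq g)) : Mm S A * (Ww S A)ᵀ = Ww S A * (Mm S A)ᵀ := by
  ext r s
  rw [← sub_eq_zero]
  simp only [Matrix.mul_apply, Matrix.transpose_apply]
  rw [← Finset.sum_sub_distrib]
  have h := om_act A (Pi.single (inl r) 1) (Pi.single (inl s) 1)
  rw [om_inl] at h
  have h' := congrArg (fun z : ℤ => (z : ZMod 4)) h
  simp only [om, Int.cast_sum, Int.cast_sub, Int.cast_mul] at h'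
  refine Eq.trans (Finset.sum_congr rfl fun k _ => ?_) (h'.trans (by simp))
  simp only [Mm, Ww, Matrix.of_apply]
  split_ifs <;> ring

lemma MW_diag (S : Finset (Fin g)) (A : ↥(Spq g)) (r : Fin g) :
    2 * (Mm S A * (Ww S A)ᵀ) r r = 0 := by
  have h := q_act A (Pi.single (inl r) 1)
  have h0 : qform g (Pi.single (inl r) 1) = 0 := by simp [qform]
  rw [h0] at h
  unfold qform at h
  rw [← Int.cast_sum, ZMod.intCast_zmod_eq_zero_iff_dvd] at h
  obtain ⟨m, hm⟩ := h
  have hm' := congrArg (fun z : ℤ => 2 * (z : ZMod 4)) hm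
  simp only [Int.cast_sum, Int.cast_mul, Finset.mul_sum] at hm'
  simp only [Matrix.mul_apply, Matrix.transpose_apply, Finset.mul_sum]
  refine Eq.trans (Finset.sum_congr rfl fun k _ => ?_) (hm'.trans ?_)
  · simp only [Mm, Ww, Matrix.of_apply]
    split_ifs
    · generalize ((act A (Pi.single (inl r) 1) (inr k) : ℤ) : ZMod 4) = x
      generalize ((act A (Pi.single (inl r) 1) (inl k) : ℤ) : ZMod 4) = y
      revert x y; decide
    · rfl
  · generalize (m : ZMod 4) = x
    push_cast
    revert x; decide

lemma quad_even (N : Matrix (Fin g) (Fin g) (ZMod 4)) (hN : Nᵀ = N) (hd : ∀ i, 2 * N i i = 0)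
    (K : Matrix (Fin g) (Fin g) (ZMod 4)) (i : Fin g) : 2 * (K * N * Kᵀ) i i = 0 := by
  classical
  have h1 : 2 * (K * N * Kᵀ) i i = ∑ p : Fin g × Fin g, 2 * (K i p.1 * N p.1 p.2 * K i p.2) := by
    rw [Fintype.sum_prod_type, Finset.sum_comm]
    simp only [Matrix.mul_apply, Matrix.transpose_apply, Finset.sum_mul, Finset.mul_sum]
  rw [h1]
  have hs : ∀ a b, N b a = N a b := fun a b => congrFun (congrFun hN a) b
  refine Finset.sum_involution (fun p _ => p.swap) ?_ ?_ ?_ ?_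
  · rintro ⟨a, b⟩ _
    simp only [Prod.swap]
    rw [hs a b, show K i b * N a b * K i a = K i a * N a b * K i b by ring]
    exact z4_two_mul _
  · rintro ⟨a, b⟩ _ hne heq
    simp only [Prod.swap, Prod.mk.injEq] at heq
    apply hne
    obtain ⟨h, -⟩ := heq
    subst h
    simp only
    rw [show 2 * (K i b * N b b * K i b) = K i b * (2 * N b b) * K i b by ring, hd]
    simp
  · simp
  · simp

lemma T_exists (S : Finset (Fin g)) (A : ↥(Spq g)) (h : 2 * (Mm S A).det = 2) :
    ∃ T : Matrix (Fin g) (Fin g) (ZMod 4), Ww S A = Mm S A * T ∧ Tᵀ = T ∧ ∀ i, 2 * T i i = 0 := by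
  have hu : IsUnit (Mm S A).det := IsUnit.of_mul_eq_one _ (z4_odd_sq _ h)
  set M := Mm S A with hM
  set W := Ww S A with hW
  have hs : M * Wᵀ = W * Mᵀ := MW_symm S A
  have hT : M⁻¹ * W = M⁻¹ * (M * Wᵀ) * (M⁻¹)ᵀ := by
    rw [hs, Matrix.mul_assoc, Matrix.mul_assoc, ← Matrix.transpose_mul, Matrix.nonsing_inv_mul _ hu,
      Matrix.transpose_one, Matrix.mul_one]
  refine ⟨M⁻¹ * W, ?_, ?_, ?_⟩
  · rw [← Matrix.mul_assoc, Matrix.mul_nonsing_inv _ hu, Matrix.one_mul]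
  · conv_rhs => rw [hT]
    rw [← Matrix.mul_assoc, Matrix.nonsing_inv_mul _ hu, Matrix.one_mul, Matrix.transpose_mul]
  · intro i
    rw [hT]
    refine quad_even _ ?_ (MW_diag S A) _ i
    rw [Matrix.transpose_mul, Matrix.transpose_transpose, hs]

lemma det_two_col {i j : Fin g} (hij : i ≠ j) (p q : Fin g → ZMod 4) :
    (Matrix.of fun r k => if k = i then p r else if k = j then q r else
      (1 : Matrix (Fin g) (Fin g) (ZMod 4)) r k).det = p i * q j - q i * p j := by
  let U : Matrix (Fin g) (Fin 2) (ZMod 4) :=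
    Matrix.of fun r c => if c = 0 then p r - (1 : Matrix (Fin g) (Fin g) (ZMod 4)) r i
      else q r - (1 : Matrix (Fin g) (Fin g) (ZMod 4)) r j
  let V : Matrix (Fin 2) (Fin g) (ZMod 4) :=
    Matrix.of fun c k => if c = 0 then (if k = i then 1 else 0) else (if k = j then 1 else 0)
  have h : (Matrix.of fun r k => if k = i then p r else if k = j then q r else
      (1 : Matrix (Fin g) (Fin g) (ZMod 4)) r k) = 1 + U * V := by
    ext r k
    simp only [Matrix.of_apply, Matrix.add_apply, Matrix.mul_apply, Fin.sum_univ_two, U, V]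
    by_cases h : k = i
    · subst h; simp [hij]
    · by_cases h' : k = j
      · subst h'; simp [h]
      · simp [h, h']
  rw [h, Matrix.det_one_add_mul_comm, Matrix.det_fin_two]
  simp [Matrix.mul_apply, U, V, hij, hij.symm, Matrix.one_apply]

lemma two_col_mul (M : Matrix (Fin g) (Fin g) (ZMod 4)) (i j : Fin g) (p q : Fin g → ZMod 4)
    (M' : Matrix (Fin g) (Fin g) (ZMod 4))
    (hi : ∀ r, M' r i = (M *ᵥ p) r) (hj : ∀ r, M' r j = (M *ᵥ q) r)
    (hk : ∀ r k, k ≠ i → k ≠ j → M' r k = M r k) (hij : i ≠ j) :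
    M'.det = M.det * (p i * q j - q i * p j) := by
  rw [← det_two_col hij, ← Matrix.det_mul]
  congr 1
  ext r k
  simp only [Matrix.mul_apply, Matrix.of_apply]
  by_cases h : k = i
  · subst h; simp [hi, Matrix.mulVec, dotProduct]
  · by_cases h' : k = j
    · subst h'; simp [hj, Matrix.mulVec, dotProduct, h]
    · simp [hk r k h h', h, h', Matrix.one_apply]

def vl (S : Finset (Fin g)) (A : ↥(Spq g)) : ZMod 4 := (S.card : ZMod 4) + ((Mm S A).det - 1)

def sg (S : Finset (Fin g)) (k : Fin g) : ZMod 4 := if k ∈ S then -1 else 1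

lemma col_change (S S' : Finset (Fin g)) (A : ↥(Spq g)) (r k : Fin g) :
    Mm S' A r k = if k ∈ symmDiff S S' then sg S k * Ww S A r k else Mm S A r k := by
  simp only [Mm, Ww, sg, Matrix.of_apply, Finset.mem_symmDiff]
  by_cases h1 : k ∈ S <;> by_cases h2 : k ∈ S' <;> simp [h1, h2]

lemma card_one (S : Finset (Fin g)) (i : Fin g) :
    (((symmDiff S {i}).card : ℕ) : ZMod 4) = S.card + sg S i := by
  classical
  by_cases h : i ∈ S
  · have : symmDiff S {i} = S.erase i := by
      ext k; simp only [Finset.mem_symmDiff, Finset.mem_singleton, Finset.mem_erase]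
      by_cases hk : k = i
      · subst hk; simp [h]
      · simp [hk]
    rw [this, sg, if_pos h, ← Finset.card_erase_add_one h]
    push_cast; ring
  · have : symmDiff S {i} = insert i S := by
      ext k; simp only [Finset.mem_symmDiff, Finset.mem_singleton, Finset.mem_insert]
      by_cases hk : k = i
      · subst hk; simp [h]
      · simp [hk]
    rw [this, sg, if_neg h, Finset.card_insert_of_notMem h]
    push_cast; ring

lemma exchange (S : Finset (Fin g)) (A : ↥(Spq g)) (h : 2 * (Mm S A).det = 2)
    (T : Matrix (Fin g) (Fin g) (ZMod 4)) (hW : Ww S A = Mm S A * T) (hs : Tᵀ = T)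
    (hd : ∀ i, 2 * T i i = 0) {i j : Fin g} (hij : i ≠ j) (ho : 2 * T i j = 2) :
    2 * (Mm (symmDiff (symmDiff S {i}) {j}) A).det = 2 ∧
    vl (symmDiff (symmDiff S {i}) {j}) A = vl S A := by
  classical
  have hmem : ∀ k, k ∈ symmDiff S (symmDiff (symmDiff S {i}) {j}) ↔ k = i ∨ k = j := by
    intro k
    rw [symmDiff_assoc, symmDiff_symmDiff_cancel_left]
    simp only [Finset.mem_symmDiff, Finset.mem_singleton]
    by_cases h1 : k = i
    · subst h1; simp [hij]
    · simp [h1]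
  have hdet := two_col_mul (Mm S A) i j (fun r => sg S i * T r i) (fun r => sg S j * T r j)
    (Mm (symmDiff (symmDiff S {i}) {j}) A)
    (fun r => by
      rw [col_change S, if_pos ((hmem i).2 (Or.inl rfl)), hW]
      simp only [Matrix.mul_apply, Matrix.mulVec, dotProduct, Finset.mul_sum]
      exact Finset.sum_congr rfl fun _ _ => by ring)
    (fun r => by
      rw [col_change S, if_pos ((hmem j).2 (Or.inr rfl)), hW]
      simp only [Matrix.mul_apply, Matrix.mulVec, dotProduct, Finset.mul_sum]
      exact Finset.sum_congr rfl fun _ _ => by ring)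
    (fun r k h1 h2 => by
      rw [col_change S, if_neg (by rw [hmem]; tauto)]) hij
  have hc : (((symmDiff (symmDiff S {i}) {j}).card : ℕ) : ZMod 4) = S.card + sg S i + sg S j := by
    rw [card_one, card_one]
    congr 1
    simp only [sg, Finset.mem_symmDiff, Finset.mem_singleton]
    simp [hij.symm]
  have hji : T j i = T i j := congrFun (congrFun hs i) j
  have hi := hd i
  have hj := hd j
  unfold vl
  rw [hc, hdet, hji]
  have hsi : sg S i = 1 ∨ sg S i = -1 := by unfold sg; split_ifs <;> simp
  have hsj : sg S j = 1 ∨ sg S j = -1 := by unfold sg; split_ifs <;> simp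
  generalize sg S i = s at *
  generalize sg S j = s' at *
  generalize T i j = x at *
  generalize T i i = y at *
  generalize T j j = z at *
  generalize (Mm S A).det = D at *
  have hyz : y * z = 0 := z4_even_mul _ _ hi hj
  have hxx : x * x = 1 := z4_odd_sq x ho
  have e : s * y * (s' * z) - s' * x * (s * x) = - (s * s') := by
    rw [show s * y * (s' * z) - s' * x * (s * x) = s * s' * (y * z) - s * s' * (x * x) by ring,
      hyz, hxx]; ring
  rw [e]
  generalize (S.card : ZMod 4) = n
  clear hdet hji hi hj ho hyz hxx e
  rcases hsi with rfl | rfl <;> rcases hsj with rfl | rfl <;> revert D n <;> decide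

lemma val_unique (A : ↥(Spq g)) (S' : Finset (Fin g)) (h' : 2 * (Mm S' A).det = 2) :
    ∀ n : ℕ, ∀ S : Finset (Fin g), (symmDiff S S').card = n → 2 * (Mm S A).det = 2 →
      vl S A = vl S' A := by
  classical
  intro n
  induction n using Nat.strong_induction_on with
  | _ n ih =>
    intro S hn h
    by_cases hne : symmDiff S S' = ∅
    · have : S = S' := by
        rw [← Finset.bot_eq_empty, symmDiff_eq_bot] at hne; exact hne
      rw [this]
    · obtain ⟨i, hi⟩ := Finset.nonempty_iff_ne_empty.mpr hne
      obtain ⟨T, hW, hs, hd⟩ := T_exists S A h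
      have hj : ∃ j ∈ symmDiff S S', 2 * T i j = 2 := by
        by_contra hcon
        push Not at hcon
        have hev : ∀ j ∈ symmDiff S S', 2 * T i j = 0 := fun j hj =>
          (z4_even_or _).resolve_left (hcon j hj)
        let R : Matrix (Fin g) (Fin g) (ZMod 4) := Matrix.of fun r k =>
          if k ∈ symmDiff S S' then sg S k * T r k else (1 : Matrix (Fin g) (Fin g) (ZMod 4)) r k
        have hR : Mm S' A = Mm S A * R := by
          ext r k
          rw [col_change S S', hW]
          simp only [Matrix.mul_apply, R, Matrix.of_apply]
          split_ifs
          · rw [Finset.mul_sum]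
            exact Finset.sum_congr rfl fun _ _ => by ring
          · simp [Matrix.one_apply]
        have h0 : 2 * R.det = 0 := by
          have h1 := Matrix.det_updateRow_smul R i 2 (R i)
          rw [Matrix.updateRow_eq_self] at h1
          rw [← h1]
          apply Matrix.det_eq_zero_of_row_eq_zero i
          intro k
          simp only [Matrix.updateRow_self, Pi.smul_apply, smul_eq_mul, R, Matrix.of_apply]
          split_ifs with hk
          · rw [mul_left_comm, hev k hk, mul_zero]
          · have : i ≠ k := fun e => hk (e ▸ hi)
            simp [Matrix.one_apply, this]
        rw [hR, Matrix.det_mul] at h'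
        have := (z4_odd_of_mul _ _ h').2
        rw [h0] at this
        exact absurd this (by decide)
      obtain ⟨j, hjm, hj⟩ := hj
      have hij : i ≠ j := by
        rintro rfl
        rw [hd] at hj
        exact absurd hj (by decide)
      obtain ⟨e1, e2⟩ := exchange S A h T hW hs hd hij hj
      rw [← e2]
      refine ih _ ?_ _ rfl e1
      rw [← hn]
      apply Finset.card_lt_card
      rw [Finset.ssubset_iff_of_subset]
      · refine ⟨i, hi, ?_⟩
        simp only [Finset.mem_symmDiff, Finset.mem_singleton] at hi ⊢
        simp [hij]; tauto
      · intro k hk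
        by_cases hki : k = i
        · rw [hki]; exact hi
        · by_cases hkj : k = j
          · rw [hkj]; exact hjm
          · simpa [Finset.mem_symmDiff, hki, hkj] using hk

def PP (A : ↥(Spq g)) (c : ZMod 4) : Prop := ∃ S, 2 * (Mm S A).det = 2 ∧ c = vl S A

lemma PP_unique {A : ↥(Spq g)} {c c' : ZMod 4} (h : PP A c) (h' : PP A c') : c = c' := by
  obtain ⟨S, h1, rfl⟩ := h
  obtain ⟨S', h2, rfl⟩ := h'
  exact val_unique A S' h2 _ S rfl h1

lemma PP_one : PP (1 : ↥(Spq g)) 0 := by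
  have : Mm (∅ : Finset (Fin g)) (1 : ↥(Spq g)) = 1 := by
    ext r k
    simp [Mm, act_one, Matrix.one_apply, Pi.single_apply, eq_comm]
  exact ⟨∅, by rw [this]; simp, by simp [vl, this]⟩

lemma PP_J (i : Fin g) (A : ↥(Spq g)) (c : ZMod 4) (h : PP A c) : PP (jE i * A) (c + 1) := by
  classical
  obtain ⟨S, h1, rfl⟩ := h
  by_cases hi : i ∈ S
  · have hM : (Mm (S.erase i) (jE i * A)) = (Mm S A).updateCol i ((-1 : ZMod 4) • fun r => Mm S A r i) := by
      ext r k
      by_cases hk : k = i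
      · subst hk; simp [Mm, act_mul, act_jE_inl, hi]
      · simp [Mm, act_mul, act_jE_inl, act_jE_inr, hk, Matrix.updateCol_apply]
    have hdet : (Mm (S.erase i) (jE i * A)).det = - (Mm S A).det := by
      rw [hM, Matrix.det_updateCol_smul]
      have : (Mm S A).updateCol i (fun r => Mm S A r i) = Mm S A := Matrix.updateCol_eq_self _ _
      rw [this]; ring
    refine ⟨S.erase i, ?_, ?_⟩
    · rw [hdet]; exact z4_neg_odd _ h1
    · unfold vl
      rw [hdet, ← Finset.card_erase_add_one hi]
      push_cast
      generalize (Mm S A).det = D at *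
      generalize (((S.erase i).card : ℕ) : ZMod 4) = n
      clear hdet hM
      revert D n; decide
  · have hM : Mm (insert i S) (jE i * A) = Mm S A := by
      ext r k
      by_cases hk : k = i
      · subst hk; simp [Mm, act_mul, act_jE_inr, hi]
      · simp [Mm, act_mul, act_jE_inl, act_jE_inr, hk]
    refine ⟨insert i S, by rw [hM]; exact h1, ?_⟩
    unfold vl
    rw [hM, Finset.card_insert_of_notMem hi]
    push_cast; ring

lemma yE_same_left {i j : Fin g} (hij : i ≠ j) (t : ℤ) (A : ↥(Spq g)) (S : Finset (Fin g))
    (hi : i ∈ S) : (Mm S (yE i j t * A)).det = (Mm S A).det := by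
  classical
  by_cases hj : j ∈ S
  · congr 1
    ext r k
    by_cases hk : k ∈ S
    · simp [Mm, act_mul, act_yE_inr, hk]
    · have : k ≠ i := fun e => hk (e ▸ hi)
      have : k ≠ j := fun e => hk (e ▸ hj)
      simp [Mm, act_mul, act_yE_inl, *]
  · rw [← Matrix.det_updateCol_add_smul_self (Mm S A) hij.symm (t : ZMod 4)]
    congr 1
    ext r k
    by_cases hk : k ∈ S
    · have : k ≠ j := fun e => hj (e ▸ hk)
      simp [Mm, act_mul, act_yE_inr, hk, Matrix.updateCol_apply, this]
    · have h1 : k ≠ i := fun e => hk (e ▸ hi)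
      by_cases hkj : k = j
      · subst hkj
        simp [Mm, act_mul, act_yE_inl, hi, hk, h1]
      · simp [Mm, act_mul, act_yE_inl, hk, Matrix.updateCol_apply, hkj, h1]

lemma yE_comm (i j : Fin g) (t : ℤ) : yE i j t = yE j i t := by
  apply act_ext; intro v
  apply vec_ext <;> intro k
  · rw [act_yE_inl, act_yE_inl]; ring
  · rw [act_yE_inr, act_yE_inr]

lemma PP_Y {i j : Fin g} (hij : i ≠ j) (t : ℤ) (A : ↥(Spq g)) (c : ZMod 4) (h : PP A c) :
    PP (yE i j t * A) c := by
  classical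
  obtain ⟨S, h1, rfl⟩ := h
  have key : ∀ S : Finset (Fin g), 2 * (Mm S A).det = 2 → (i ∈ S ∨ j ∈ S) →
      PP (yE i j t * A) (vl S A) := by
    intro S h1 hS
    have : (Mm S (yE i j t * A)).det = (Mm S A).det := by
      rcases hS with hS | hS
      · exact yE_same_left hij t A S hS
      · rw [yE_comm]; exact yE_same_left hij.symm t A S hS
    exact ⟨S, by rw [this]; exact h1, by rw [vl, vl, this]⟩
  by_cases hS : i ∈ S ∨ j ∈ S
  · exact key S h1 hS
  · push Not at hS
    obtain ⟨hi, hj⟩ := hS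
    obtain ⟨T, hW, hs, hd⟩ := T_exists S A h1
    rcases z4_even_or (T i j) with ho | he
    · obtain ⟨e1, e2⟩ := exchange S A h1 T hW hs hd hij ho
      rw [← e2]
      refine key _ e1 (Or.inl ?_)
      simp [Finset.mem_symmDiff, hij, hi]
    · have hW' : ∀ r k, k ∉ S → ((act A (Pi.single (inl r) 1) (inr k) : ℤ) : ZMod 4)
          = ∑ l, Mm S A r l * T l k := by
        intro r k hk
        have := congrFun (congrFun hW r) k
        rw [Matrix.mul_apply] at this
        rw [← this]; simp [Ww, hk]
      have hdet := two_col_mul (Mm S A) i j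
        (fun r => (1 : Matrix (Fin g) (Fin g) (ZMod 4)) r i + t * T r j)
        (fun r => (1 : Matrix (Fin g) (Fin g) (ZMod 4)) r j + t * T r i)
        (Mm S (yE i j t * A))
        (fun r => by
          have : Mm S (yE i j t * A) r i = Mm S A r i + t * ∑ l, Mm S A r l * T l j := by
            rw [← hW' r j hj]
            simp [Mm, act_mul, act_yE_inl, hi, hij]
          rw [this]
          simp only [Matrix.mulVec, dotProduct, mul_add, Finset.sum_add_distrib, Finset.mul_sum]
          congr 1
          · simp [Matrix.one_apply]
          · exact Finset.sum_congr rfl fun _ _ => by ring)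
        (fun r => by
          have : Mm S (yE i j t * A) r j = Mm S A r j + t * ∑ l, Mm S A r l * T l i := by
            rw [← hW' r i hi]
            simp [Mm, act_mul, act_yE_inl, hj, hij.symm]
          rw [this]
          simp only [Matrix.mulVec, dotProduct, mul_add, Finset.sum_add_distrib, Finset.mul_sum]
          congr 1
          · simp [Matrix.one_apply]
          · exact Finset.sum_congr rfl fun _ _ => by ring)
        (fun r k h1 h2 => by
          simp [Mm, act_mul, act_yE_inl, act_yE_inr, h1, h2]) hij
      have hji : T j i = T i j := congrFun (congrFun hs i) j
      have h2 : (Mm S (yE i j t * A)).det = (Mm S A).det := by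
        rw [hdet]
        simp only [Matrix.one_apply, hij, hij.symm, if_true, if_false, hji]
        have hii := hd i
        have hjj := hd j
        generalize (t : ZMod 4) = t' at *
        generalize T i j = x at *
        generalize T i i = y at *
        generalize T j j = z at *
        have e1 : (1 + t' * x) * (1 + t' * x) = 1 := z4_sq_one _ _ he
        have e2 : y * z = 0 := z4_even_mul _ _ hii hjj
        rw [show (1 + t' * x) * (1 + t' * x) - (0 + t' * y) * (0 + t' * z) =
          (1 + t' * x) * (1 + t' * x) - t' * t' * (y * z) by ring, e1, e2]
        ring
      exact ⟨S, by rw [h2]; exact h1, by rw [vl, vl, h2]⟩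

lemma jE_sq (i : Fin g) (v : HypIdx g → ℤ) (k : Fin g) :
    act (jE i * jE i) v (inl k) = (if k = i then - v (inl k) else v (inl k)) ∧
    act (jE i * jE i) v (inr k) = (if k = i then - v (inr k) else v (inr k)) := by
  simp only [act_mul, act_jE_inl, act_jE_inr]
  constructor <;> split_ifs <;> simp

lemma jE_four (i : Fin g) : jE i * (jE i * (jE i * jE i)) = 1 := by
  rw [← mul_assoc]
  apply act_ext; intro v
  rw [act_one, act_mul]
  apply vec_ext <;> intro k
  · rw [(jE_sq _ _ _).1, (jE_sq _ _ _).1]; split_ifs <;> simp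
  · rw [(jE_sq _ _ _).2, (jE_sq _ _ _).2]; split_ifs <;> simp

lemma yE_neg (i j : Fin g) (t : ℤ) : yE i j (-t) * yE i j t = 1 := by
  apply act_ext; intro v
  rw [act_one, act_mul]
  apply vec_ext <;> intro k
  · simp only [act_yE_inl, act_yE_inr]; split_ifs <;> ring
  · simp only [act_yE_inr]

lemma PP_exists (hg : 2 ≤ g) (B : ↥(Spq g)) :
    ∃ c', ∀ A c, PP A c ↔ PP (B * A) (c + c') := by
  have hB : B ∈ HH g := by rw [gen hg]; trivial
  unfold HH at hB
  induction hB using Subgroup.closure_induction with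
  | mem x hx =>
    rcases hx with ⟨i, rfl⟩ | ⟨i, j, t, hij, rfl⟩
    · refine ⟨1, fun A c => ⟨PP_J i A c, fun h => ?_⟩⟩
      have := PP_J i _ _ (PP_J i _ _ (PP_J i _ _ h))
      rw [← mul_assoc, ← mul_assoc, ← mul_assoc, mul_assoc (jE i * jE i), mul_assoc (jE i),
        jE_four, one_mul] at this
      convert this using 1
      exact z4_four c
    · refine ⟨0, fun A c => ⟨fun h => by simpa using PP_Y hij t A c h, fun h => ?_⟩⟩
      have := PP_Y hij (-t) _ _ h
      rwa [← mul_assoc, yE_neg, one_mul, add_zero] at this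
  | one => exact ⟨0, fun A c => by simp⟩
  | mul x y _ _ hx hy =>
    obtain ⟨a, ha⟩ := hx
    obtain ⟨b, hb⟩ := hy
    refine ⟨b + a, fun A c => ?_⟩
    rw [hb, ha, ← mul_assoc, ← add_assoc]
  | inv x _ hx =>
    obtain ⟨a, ha⟩ := hx
    refine ⟨-a, fun A c => ?_⟩
    rw [ha (x⁻¹ * A), mul_inv_cancel_left, neg_add_cancel_right]

lemma char_exists (hg : 2 ≤ g) : ∃ f : ↥(Spq g) →* Multiplicative (ZMod 4),
    ∀ i, f (jE i) = Multiplicative.ofAdd 1 := by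
  choose c hc using PP_exists (g := g) hg
  have h1 : ∀ B, PP B (c B) := by
    intro B
    have := (hc B 1 0).1 PP_one
    simpa using this
  refine ⟨MonoidHom.mk' (fun B => Multiplicative.ofAdd (c B)) ?_, ?_⟩
  · intro A B
    rw [← ofAdd_add]
    congr 1
    have := (hc A B (c B)).1 (h1 B)
    rw [PP_unique (h1 (A * B)) this, add_comm]
  · intro i
    have := PP_J i 1 0 PP_one
    rw [mul_one, zero_add] at this
    show Multiplicative.ofAdd (c (jE i)) = _
    rw [PP_unique (h1 (jE i)) this]

lemma of_yE (hg : 3 ≤ g) {i j : Fin g} (hij : i ≠ j) (t : ℤ) :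
    Abelianization.of (yE i j t) = 1 := by
  classical
  obtain ⟨k, hk⟩ : ∃ k, k ∉ ({i, j} : Finset (Fin g)) := by
    by_contra hcon
    push Not at hcon
    have h1 : (Finset.univ : Finset (Fin g)) ⊆ {i, j} := fun x _ => hcon x
    have := (Finset.card_le_card h1).trans Finset.card_le_two
    simp at this; omega
  simp only [Finset.mem_insert, Finset.mem_singleton, not_or] at hk
  obtain ⟨hki, hkj⟩ := hk
  have hik : i ≠ k := fun h => hki h.symm
  have e1 : xE i k 1 * yE k j t * xE i k (-1) = yE i j t * yE k j t := by
    apply act_ext; intro v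
    apply vec_ext <;> intro l
    · simp only [act_mul, act_xE_inl hik, act_xE_inr hik, act_yE_inl, act_yE_inr]
      by_cases h1 : l = i
      · subst h1; simp [hij, hik, hij.symm, hik.symm, hkj, Ne.symm hkj]
      · by_cases h2 : l = j
        · subst h2; simp [hij, hik, hij.symm, hik.symm, hkj, Ne.symm hkj]; ring
        · by_cases h3 : l = k
          · subst h3; simp [hij, hik, hij.symm, hik.symm, hkj, Ne.symm hkj]
          · simp [h1, h2, h3]
    · simp only [act_mul, act_xE_inl hik, act_xE_inr hik, act_yE_inl, act_yE_inr]
      by_cases h3 : l = k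
      · subst h3; simp [hik]
      · simp [h3]
  have e2 : xE i k 1 * xE i k (-1) = 1 := by
    apply act_ext; intro v
    rw [act_one, act_mul]
    apply vec_ext <;> intro l
    · simp only [act_xE_inl hik]
      by_cases h1 : l = i <;> simp [h1, hki]
    · simp only [act_xE_inr hik]
      by_cases h1 : l = k <;> simp [h1, hik]
  have e1' := congrArg Abelianization.of e1
  have e2' := congrArg Abelianization.of e2
  simp only [map_mul, map_one] at e1' e2'
  rw [mul_right_comm, e2', one_mul] at e1'
  exact (mul_eq_right.mp e1'.symm)

lemma of_xE (hg : 3 ≤ g) {i j : Fin g} (hij : i ≠ j) (t : ℤ) :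
    Abelianization.of (xE i j t) = 1 := by
  rw [xE, map_mul, map_mul, of_yE hg hij, mul_one, ← map_mul, inv_mul_cancel, map_one]

def pE (i j : Fin g) : ↥(Spq g) := xE i j 1 * xE j i (-1) * xE i j 1

lemma act_pE_inl {i j : Fin g} (hij : i ≠ j) (v : HypIdx g → ℤ) (k : Fin g) :
    act (pE i j) v (inl k) = if k = i then v (inl j) else if k = j then - v (inl i) else v (inl k) := by
  simp only [pE, act_mul, act_xE_inl hij, act_xE_inl hij.symm]
  by_cases h1 : k = i
  · subst h1; simp [hij, hij.symm]
  · by_cases h2 : k = j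
    · subst h2; simp [hij, hij.symm]
    · simp [h1, h2]

lemma act_pE_inr {i j : Fin g} (hij : i ≠ j) (v : HypIdx g → ℤ) (k : Fin g) :
    act (pE i j) v (inr k) = if k = i then v (inr j) else if k = j then - v (inr i) else v (inr k) := by
  simp only [pE, act_mul, act_xE_inr hij, act_xE_inr hij.symm]
  by_cases h1 : k = i
  · subst h1; simp [hij, hij.symm]
  · by_cases h2 : k = j
    · subst h2; simp [hij, hij.symm]
    · simp [h1, h2]

lemma of_pE (hg : 3 ≤ g) {i j : Fin g} (hij : i ≠ j) : Abelianization.of (pE i j) = 1 := by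
  rw [pE, map_mul, map_mul, of_xE hg hij, of_xE hg hij.symm, mul_one, mul_one]

lemma of_jE (i j : Fin g) : Abelianization.of (jE i) = Abelianization.of (jE j) := by
  by_cases hij : i = j
  · rw [hij]
  have e : pE i j * jE j = jE i * pE i j := by
    apply act_ext; intro v
    apply vec_ext <;> intro k
    · simp only [act_mul, act_pE_inl hij, act_pE_inr hij, act_jE_inl, act_jE_inr]
      by_cases h1 : k = i
      · subst h1; simp
      · by_cases h2 : k = j
        · subst h2; simp [h1, hij]
        · simp [h1, h2]
    · simp only [act_mul, act_pE_inl hij, act_pE_inr hij, act_jE_inl, act_jE_inr]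
      by_cases h1 : k = i
      · subst h1; simp
      · by_cases h2 : k = j
        · subst h2; simp [h1, hij]
        · simp [h1, h2]
  have e' := congrArg Abelianization.of e
  rw [map_mul, map_mul, mul_comm] at e'
  exact (mul_right_cancel e').symm

lemma of_jE_four (hg : 3 ≤ g) (i : Fin g) : Abelianization.of (jE i) ^ 4 = 1 := by
  rw [← map_pow, show jE i ^ 4 = 1 from ?_, map_one]
  rw [← jE_four i]; simp [pow_succ, mul_assoc]

end SpqAux

/-- For every `g ≥ 3`, the abelianisation of `Sp^q_{2g}(ℤ)` is cyclic of
order 4. -/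
theorem abelianization_Spq (g : ℕ) (hg : 3 ≤ g) :
    Nonempty (Abelianization ↥(Spq g) ≃* Multiplicative (ZMod 4)) := by
  obtain ⟨f, hf⟩ := SpqAux.char_exists (g := g) (by omega)
  let i0 : Fin g := ⟨0, by omega⟩
  set x := Abelianization.of (SpqAux.jE i0) with hx
  have hx4 : x ^ 4 = 1 := SpqAux.of_jE_four hg i0
  have hgen : ∀ B : ↥(Spq g), ∃ n : ℤ, Abelianization.of B = x ^ n := by
    intro B
    have hB : B ∈ SpqAux.HH g := by rw [SpqAux.gen (by omega)]; trivial
    unfold SpqAux.HH at hB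
    induction hB using Subgroup.closure_induction with
    | mem y hy =>
      rcases hy with ⟨i, rfl⟩ | ⟨i, j, t, hij, rfl⟩
      · exact ⟨1, by rw [zpow_one, hx]; exact SpqAux.of_jE _ _⟩
      · exact ⟨0, by rw [zpow_zero]; exact SpqAux.of_yE hg hij t⟩
    | one => exact ⟨0, by simp⟩
    | mul y z _ _ hy hz =>
      obtain ⟨a, ha⟩ := hy
      obtain ⟨b, hb⟩ := hz
      exact ⟨a + b, by rw [map_mul, ha, hb, _root_.zpow_add]⟩
    | inv y _ hy =>
      obtain ⟨a, ha⟩ := hy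
      exact ⟨-a, by rw [map_inv, ha, _root_.zpow_neg]⟩
  let F := Abelianization.lift f
  have hFx : F x = Multiplicative.ofAdd 1 := by
    rw [hx]; exact (Abelianization.lift_apply_of f _).trans (hf i0)
  have hFn : ∀ n : ℤ, F (x ^ n) = Multiplicative.ofAdd ((n : ℤ) : ZMod 4) := by
    intro n
    rw [map_zpow, hFx, ← ofAdd_zsmul]; simp
  refine ⟨MulEquiv.ofBijective F ⟨?_, ?_⟩⟩
  · rw [injective_iff_map_eq_one]
    intro y hy
    obtain ⟨B, rfl⟩ := QuotientGroup.mk_surjective y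
    obtain ⟨n, hn⟩ := hgen B
    change Abelianization.of B = 1
    change F (Abelianization.of B) = 1 at hy
    rw [hn, hFn] at hy
    have h0 : ((n : ℤ) : ZMod 4) = 0 := hy
    rw [ZMod.intCast_zmod_eq_zero_iff_dvd] at h0
    obtain ⟨m, rfl⟩ := h0
    rw [hn, _root_.zpow_mul]
    have : x ^ ((4 : ℕ) : ℤ) = 1 := by rw [zpow_natCast]; exact hx4
    rw [this, _root_.one_zpow]
  · intro c
    obtain ⟨n, hn⟩ := ZMod.intCast_surjective (Multiplicative.toAdd c)
    exact ⟨x ^ n, by rw [hFn, hn]; rfl⟩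
end
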